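/- arXiv:1501.02360 — 6 statements merged into one kernel-verified Lean document; each statement's English description precedes it below -/
import Mathlib

section
/- (Main theorem.) Let (H, A, C) be a Doi Hom-Hopf datum. The following are equivalent: (i) there exists a normalized (A,β)-integral θ : C⊗C → A; (ii) there exists a family of k-linear maps ν_M : M⊗C → M, one for each Doi Hom-Hopf module (M, μ) over (H, A, C), such that each ν_M satisfies ν_M∘(μ⊗γ) = μ∘ν_M, is right A-linear for the action (m⊗c)·a = m·a₀ ⊗ c·a₁ on M⊗C, is right C-colinear for the coaction ρ_{M⊗C}(m⊗c) = (μ⁻¹(m)⊗c₁)⊗γ(c₂), satisfies ν_M(m₀⊗m₁) = m for all m ∈ M, and the family is natural (for every morphism f : M → N of Doi Hom-Hopf modules, ν_N∘(f⊗id_C) = f∘ν_M). (This says exactly that the forgetful functor from Doi Hom-Hopf modules to right (A,β)-Hom-modules is separable.) -/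
open TensorProduct

namespace DoiHomHopf

/-- A monoidal Hom-algebra `(A, β)`. -/
structure HomAlg (k : Type*) [CommRing k] (A : Type*) [AddCommGroup A] [Module k A] where
  str : A ≃ₗ[k] A
  mul : A →ₗ[k] A →ₗ[k] A
  one : A
  str_mul : ∀ a b, str (mul a b) = mul (str a) (str b)
  str_one : str one = one
  hom_assoc : ∀ a b c, mul (str a) (mul b c) = mul (mul a b) (str c)
  mul_one : ∀ a, mul a one = str a
  one_mul : ∀ a, mul one a = str a

/-- A monoidal Hom-coalgebra `(C, γ)`. -/
structure HomCoalg (k : Type*) [CommRing k] (C : Type*) [AddCommGroup C] [Module k C] where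
  str : C ≃ₗ[k] C
  comul : C →ₗ[k] C ⊗[k] C
  counit : C →ₗ[k] k
  comul_str : ∀ c, comul (str c) = TensorProduct.map str.toLinearMap str.toLinearMap (comul c)
  counit_str : ∀ c, counit (str c) = counit c
  hom_coassoc : ∀ c,
    TensorProduct.map str.symm.toLinearMap comul (comul c) =
      TensorProduct.assoc k C C C (TensorProduct.map comul str.symm.toLinearMap (comul c))
  counit_comul_left : ∀ c,
    TensorProduct.lid k C (TensorProduct.map counit LinearMap.id (comul c)) = str.symm c
  counit_comul_right : ∀ c,
    TensorProduct.rid k C (TensorProduct.map LinearMap.id counit (comul c)) = str.symm c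

/-- A monoidal Hom-bialgebra. -/
structure HomBialg (k : Type*) [CommRing k] (H : Type*) [AddCommGroup H] [Module k H]
    extends HomAlg k H, HomCoalg k H where
  comul_mul : ∀ a b, comul (mul a b) = TensorProduct.map₂ mul mul (comul a) (comul b)
  comul_one : comul one = one ⊗ₜ[k] one
  counit_mul : ∀ a b, counit (mul a b) = counit a * counit b
  counit_one : counit one = 1

/-- A monoidal Hom-Hopf algebra `(H, α)` with antipode `S`. -/
structure HomHopf (k : Type*) [CommRing k] (H : Type*) [AddCommGroup H] [Module k H]
    extends HomBialg k H where
  S : H →ₗ[k] H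
  S_mul_comul : ∀ h,
    TensorProduct.lift mul (TensorProduct.map S LinearMap.id (comul h)) = counit h • one
  mul_S_comul : ∀ h,
    TensorProduct.lift mul (TensorProduct.map LinearMap.id S (comul h)) = counit h • one
  S_str : ∀ h, S (str h) = str (S h)

/-- A right `(A, β)`-Hom-module `(M, μ)`. -/
structure HomMod {k : Type*} [CommRing k] {A : Type*} [AddCommGroup A] [Module k A]
    (hA : HomAlg k A) (M : Type*) [AddCommGroup M] [Module k M] where
  str : M ≃ₗ[k] M
  act : M →ₗ[k] A →ₗ[k] M
  act_act : ∀ m a b, act (act m a) (hA.str b) = act (str m) (hA.mul a b)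
  act_one : ∀ m, act m hA.one = str m
  str_act : ∀ m a, str (act m a) = act (str m) (hA.str a)

/-- A right `(C, γ)`-Hom-comodule `(M, μ)`. -/
structure HomComod {k : Type*} [CommRing k] {C : Type*} [AddCommGroup C] [Module k C]
    (hC : HomCoalg k C) (M : Type*) [AddCommGroup M] [Module k M] where
  str : M ≃ₗ[k] M
  coact : M →ₗ[k] M ⊗[k] C
  hom_coassoc : ∀ m,
    TensorProduct.assoc k M C C
        (TensorProduct.map coact hC.str.symm.toLinearMap (coact m)) =
      TensorProduct.map str.symm.toLinearMap hC.comul (coact m)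
  counit_coact : ∀ m,
    TensorProduct.rid k M (TensorProduct.map LinearMap.id hC.counit (coact m)) = str.symm m
  coact_str : ∀ m, coact (str m) = TensorProduct.map str.toLinearMap hC.str.toLinearMap (coact m)

/-- A right `(H, α)`-Hom-comodule algebra `(A, β)`. -/
structure HomComodAlg {k : Type*} [CommRing k] {H : Type*} [AddCommGroup H] [Module k H]
    (hH : HomBialg k H) (A : Type*) [AddCommGroup A] [Module k A] extends HomAlg k A where
  coact : A →ₗ[k] A ⊗[k] H
  hom_coassoc : ∀ a,
    TensorProduct.assoc k A H H
        (TensorProduct.map coact hH.str.symm.toLinearMap (coact a)) =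
      TensorProduct.map str.symm.toLinearMap hH.comul (coact a)
  counit_coact : ∀ a,
    TensorProduct.rid k A (TensorProduct.map LinearMap.id hH.counit (coact a)) = str.symm a
  coact_str : ∀ a, coact (str a) = TensorProduct.map str.toLinearMap hH.str.toLinearMap (coact a)
  coact_mul : ∀ a b, coact (mul a b) = TensorProduct.map₂ mul hH.mul (coact a) (coact b)
  coact_one : coact one = one ⊗ₜ[k] hH.one

/-- A right `(H, α)`-Hom-module coalgebra `(C, γ)`. -/
structure HomModCoalg {k : Type*} [CommRing k] {H : Type*} [AddCommGroup H] [Module k H]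
    (hH : HomBialg k H) (C : Type*) [AddCommGroup C] [Module k C] extends HomCoalg k C where
  act : C →ₗ[k] H →ₗ[k] C
  act_act : ∀ c h g, act (act c h) (hH.str g) = act (str c) (hH.mul h g)
  act_one : ∀ c, act c hH.one = str c
  str_act : ∀ c h, str (act c h) = act (str c) (hH.str h)
  comul_act : ∀ c h, comul (act c h) = TensorProduct.map₂ act act (comul c) (hH.comul h)
  counit_act : ∀ c h, counit (act c h) = counit c * hH.counit h

/-- A Doi Hom-Hopf module `(M, μ)` over the Doi Hom-Hopf datum `(H, A, C)`. -/
structure DoiMod {k : Type*} [CommRing k] {H A C : Type*}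
    [AddCommGroup H] [Module k H] [AddCommGroup A] [Module k A] [AddCommGroup C] [Module k C]
    {hH : HomBialg k H} (hA : HomComodAlg hH A) (hC : HomModCoalg hH C)
    (M : Type*) [AddCommGroup M] [Module k M] where
  str : M ≃ₗ[k] M
  act : M →ₗ[k] A →ₗ[k] M
  coact : M →ₗ[k] M ⊗[k] C
  act_act : ∀ m a b, act (act m a) (hA.str b) = act (str m) (hA.mul a b)
  act_one : ∀ m, act m hA.one = str m
  str_act : ∀ m a, str (act m a) = act (str m) (hA.str a)
  hom_coassoc : ∀ m,
    TensorProduct.assoc k M C C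
        (TensorProduct.map coact hC.str.symm.toLinearMap (coact m)) =
      TensorProduct.map str.symm.toLinearMap hC.comul (coact m)
  counit_coact : ∀ m,
    TensorProduct.rid k M (TensorProduct.map LinearMap.id hC.counit (coact m)) = str.symm m
  coact_str : ∀ m, coact (str m) = TensorProduct.map str.toLinearMap hC.str.toLinearMap (coact m)
  compat : ∀ m a,
    coact (act m a) = TensorProduct.map₂ act hC.act (coact m) (hA.coact a)

/-- `f` is a morphism of Doi Hom-Hopf modules. -/
structure IsDoiHom {k : Type*} [CommRing k] {H A C : Type*}
    [AddCommGroup H] [Module k H] [AddCommGroup A] [Module k A] [AddCommGroup C] [Module k C]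
    {hH : HomBialg k H} {hA : HomComodAlg hH A} {hC : HomModCoalg hH C}
    {M N : Type*} [AddCommGroup M] [Module k M] [AddCommGroup N] [Module k N]
    (dM : DoiMod hA hC M) (dN : DoiMod hA hC N) (f : M →ₗ[k] N) : Prop where
  str_comm : ∀ m, f (dM.str m) = dN.str (f m)
  act_comm : ∀ m a, f (dM.act m a) = dN.act (f m) a
  coact_comm : ∀ m, dN.coact (f m) = TensorProduct.map f LinearMap.id (dM.coact m)

/-- A normalized `(A, β)`-integral `θ : C ⊗ C → A` for the Doi Hom-Hopf datum `(H, A, C)`. -/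
structure NIntegral {k : Type*} [CommRing k] {H A C : Type*}
    [AddCommGroup H] [Module k H] [AddCommGroup A] [Module k A] [AddCommGroup C] [Module k C]
    {hH : HomBialg k H} (hA : HomComodAlg hH A) (hC : HomModCoalg hH C) where
  θ : C ⊗[k] C →ₗ[k] A
  θ_str : ∀ c d, θ (hC.str c ⊗ₜ[k] hC.str d) = hA.str (θ (c ⊗ₜ[k] d))
  cond1 : ∀ c d : C,
    TensorProduct.map (TensorProduct.curry θ (hC.str.symm d)) hC.str.toLinearMap (hC.comul c) =
      TensorProduct.map hA.str.toLinearMap (TensorProduct.lift hC.act)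
        ((TensorProduct.assoc k A C H)
          (TensorProduct.map (TensorProduct.comm k C A).toLinearMap LinearMap.id
            ((TensorProduct.assoc k C A H).symm
              (TensorProduct.map LinearMap.id
                (hA.coact ∘ₗ (TensorProduct.curry θ).flip (hC.str.symm c)) (hC.comul d)))))
  cond2 : ∀ c, θ (hC.comul c) = hC.counit c • hA.one
  cond3 : ∀ (a : A) (c d : C),
    TensorProduct.lift hA.mul
      (TensorProduct.map LinearMap.id θ
        ((TensorProduct.assoc k A C C)
          (TensorProduct.map
            (TensorProduct.map (hA.str.toLinearMap ∘ₗ hA.str.toLinearMap)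
              (hC.act (hC.str.symm d)))
            (hC.act (hC.str.symm c))
            (TensorProduct.map hA.coact hH.str.symm.toLinearMap (hA.coact a))))) =
      hA.mul (θ (d ⊗ₜ[k] c)) a

/-- The right `A`-action on `M ⊗ C` given by `(m ⊗ c) · a = m · a₀ ⊗ c · a₁`. -/
noncomputable def Gact {k : Type*} [CommRing k] {H A C : Type*}
    [AddCommGroup H] [Module k H] [AddCommGroup A] [Module k A] [AddCommGroup C] [Module k C]
    {hH : HomBialg k H} (hA : HomComodAlg hH A) (hC : HomModCoalg hH C)
    {M : Type*} [AddCommGroup M] [Module k M] (act : M →ₗ[k] A →ₗ[k] M) :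
    (M ⊗[k] C) →ₗ[k] A →ₗ[k] (M ⊗[k] C) :=
  (TensorProduct.map₂ act hC.act).compl₂ hA.coact

/-- The right `C`-coaction on `M ⊗ C` given by `ρ(m ⊗ c) = (μ⁻¹(m) ⊗ c₁) ⊗ γ(c₂)`. -/
noncomputable def Gcoact {k : Type*} [CommRing k] {C : Type*} [AddCommGroup C] [Module k C]
    (hC : HomCoalg k C) {M : Type*} [AddCommGroup M] [Module k M] (str : M ≃ₗ[k] M) :
    (M ⊗[k] C) →ₗ[k] (M ⊗[k] C) ⊗[k] C :=
  (TensorProduct.assoc k M C C).symm.toLinearMap ∘ₗ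
    TensorProduct.map str.symm.toLinearMap
      (TensorProduct.map LinearMap.id hC.str.toLinearMap ∘ₗ hC.comul)

/-- The counit of the adjunction: `δ_N(n ⊗ c) = ε(c) ν(n)`. -/
noncomputable def deltaMap {k : Type*} [CommRing k] {C : Type*} [AddCommGroup C] [Module k C]
    (hC : HomCoalg k C) {N : Type*} [AddCommGroup N] [Module k N] (str : N ≃ₗ[k] N) :
    (N ⊗[k] C) →ₗ[k] N :=
  str.toLinearMap ∘ₗ (TensorProduct.rid k N).toLinearMap ∘ₗ
    TensorProduct.map LinearMap.id hC.counit

/-- The map `ν_M : M ⊗ C → M`, `ν_M(m ⊗ c) = μ(m₀) · θ(m₁ ⊗ γ⁻¹(c))`. -/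
noncomputable def nuMap {k : Type*} [CommRing k] {H A C : Type*}
    [AddCommGroup H] [Module k H] [AddCommGroup A] [Module k A] [AddCommGroup C] [Module k C]
    {hH : HomBialg k H} {hA : HomComodAlg hH A} {hC : HomModCoalg hH C}
    {M : Type*} [AddCommGroup M] [Module k M]
    (θ : C ⊗[k] C →ₗ[k] A) (d : DoiMod hA hC M) : (M ⊗[k] C) →ₗ[k] M :=
  TensorProduct.lift d.act ∘ₗ TensorProduct.map d.str.toLinearMap θ ∘ₗ
    (TensorProduct.assoc k M C C).toLinearMap ∘ₗ
    TensorProduct.map d.coact hC.str.symm.toLinearMap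

end DoiHomHopf

open DoiHomHopf

universe u v

namespace DoiHomHopf

section helpers
variable {k : Type*} [CommRing k] {H A C : Type*}
    [AddCommGroup H] [Module k H] [AddCommGroup A] [Module k A] [AddCommGroup C] [Module k C]
    {hH : HomBialg k H} (hA : HomComodAlg hH A) (hC : HomModCoalg hH C)
    {U : Type*} [AddCommGroup U] [Module k U]

theorem HomAlg.symm_mul (hA : HomAlg k A) (a b : A) :
    hA.str.symm (hA.mul a b) = hA.mul (hA.str.symm a) (hA.str.symm b) := by
  rw [LinearEquiv.symm_apply_eq, hA.str_mul]; simp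

theorem HomAlg.symm_one (hA : HomAlg k A) : hA.str.symm hA.one = hA.one := by
  rw [LinearEquiv.symm_apply_eq, hA.str_one]

theorem HomMod.symm_act {hA : HomAlg k A} (d : HomMod hA U) (u : U) (a : A) :
    d.str.symm (d.act u a) = d.act (d.str.symm u) (hA.str.symm a) := by
  rw [LinearEquiv.symm_apply_eq, d.str_act]; simp

theorem HomModCoalg.symm_act (c : C) (h : H) :
    hC.str.symm (hC.act c h) = hC.act (hC.str.symm c) (hH.str.symm h) := by
  rw [LinearEquiv.symm_apply_eq, hC.str_act]; simp

theorem HomCoalg.comul_symm (hC : HomCoalg k C) (c : C) :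
    hC.comul (hC.str.symm c) =
      TensorProduct.map hC.str.symm.toLinearMap hC.str.symm.toLinearMap (hC.comul c) := by
  obtain ⟨c, rfl⟩ := hC.str.surjective c
  rw [hC.comul_str, LinearEquiv.symm_apply_apply]
  generalize hC.comul c = t
  induction t using TensorProduct.induction_on with
  | zero => simp
  | tmul x y => simp
  | add x y hx hy => simp only [map_add, ← hx, ← hy]

theorem HomCoalg.counit_symm (hC : HomCoalg k C) (c : C) :
    hC.counit (hC.str.symm c) = hC.counit c := by
  rw [← hC.counit_str]; simp

theorem Gact_tmul (act : U →ₗ[k] A →ₗ[k] U) (u : U) (c : C) (a : A) :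
    Gact hA hC act (u ⊗ₜ c) a = TensorProduct.map (act u) (hC.act c) (hA.coact a) := by
  simp [Gact]

/-- The Doi module `U ⊗ C`. -/
noncomputable def Gmod (d : HomMod hA.toHomAlg U) : DoiMod hA hC (U ⊗[k] C) where
  str := TensorProduct.congr d.str hC.str
  act := Gact hA hC d.act
  coact := Gcoact hC.toHomCoalg d.str
  act_act := by
    intro x a b
    simp only [Gact, LinearMap.compl₂_apply, hA.coact_str, hA.coact_mul]
    generalize hA.coact a = s
    generalize hA.coact b = t
    induction x using TensorProduct.induction_on with
    | zero => simp
    | add x y hx hy => simp only [map_add, LinearMap.add_apply, hx, hy]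
    | tmul u c =>
    induction s using TensorProduct.induction_on with
    | zero => simp
    | add x y hx hy => simp only [map_add, LinearMap.add_apply, hx, hy]
    | tmul a h =>
    induction t using TensorProduct.induction_on with
    | zero => simp
    | add x y hx hy => simp only [map_add, LinearMap.add_apply, hx, hy]
    | tmul b g => simp [d.act_act, hC.act_act]
  act_one := by
    intro x
    simp only [Gact, LinearMap.compl₂_apply, hA.coact_one]
    induction x using TensorProduct.induction_on with
    | zero => simp
    | add x y hx hy => simp only [map_add, LinearMap.add_apply, hx, hy]
    | tmul u c => simp [d.act_one, hC.act_one]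
  str_act := by
    intro x a
    simp only [Gact, LinearMap.compl₂_apply, hA.coact_str]
    generalize hA.coact a = s
    induction x using TensorProduct.induction_on with
    | zero => simp
    | add x y hx hy => simp only [map_add, LinearMap.add_apply, hx, hy]
    | tmul u c =>
    induction s using TensorProduct.induction_on with
    | zero => simp
    | add x y hx hy => simp only [map_add, hx, hy]
    | tmul a h => simp [d.str_act, hC.str_act]
  hom_coassoc := by
    intro x
    induction x using TensorProduct.induction_on with
    | zero => simp
    | add x y hx hy => simp only [map_add, hx, hy]
    | tmul u c =>
      let L : C ⊗[k] (C ⊗[k] C) →ₗ[k] (U ⊗[k] C) ⊗[k] (C ⊗[k] C) :=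
        (TensorProduct.assoc k U C (C ⊗[k] C)).symm.toLinearMap ∘ₗ
        (TensorProduct.mk k U _ (d.str.symm (d.str.symm u))) ∘ₗ
          TensorProduct.map LinearMap.id (TensorProduct.map hC.str.toLinearMap hC.str.toLinearMap)
      have h := congrArg L (hC.hom_coassoc c)
      refine Eq.trans ?_ (h.symm.trans ?_)
      · simp only [Gcoact, LinearMap.comp_apply, TensorProduct.map_tmul]
        generalize hC.comul c = t
        induction t using TensorProduct.induction_on with
        | zero => simp
        | add x y hx hy => simp only [map_add, tmul_add, hx, hy]
        | tmul c1 c2 =>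
          simp
          generalize hC.comul c1 = t
          induction t using TensorProduct.induction_on with
          | zero => simp
          | add x y hx hy => simp only [map_add, tmul_add, add_tmul, hx, hy]
          | tmul c1 c3 => simp [L]
      · simp only [Gcoact, LinearMap.comp_apply, TensorProduct.map_tmul]
        generalize hC.comul c = t
        induction t using TensorProduct.induction_on with
        | zero => simp
        | add x y hx hy => simp only [map_add, tmul_add, hx, hy]
        | tmul c1 c2 => simp [L, hC.comul_str]
  counit_coact := by
    intro x
    induction x using TensorProduct.induction_on with
    | zero => simp
    | add x y hx hy => simp only [map_add, hx, hy]
    | tmul u c =>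
      have h := congrArg (TensorProduct.mk k U C (d.str.symm u)) (hC.counit_comul_right c)
      refine Eq.trans ?_ (h.trans ?_)
      · simp only [Gcoact, LinearMap.comp_apply, TensorProduct.map_tmul]
        generalize hC.comul c = t
        induction t using TensorProduct.induction_on with
        | zero => simp
        | add x y hx hy => simp only [map_add, tmul_add, hx, hy]
        | tmul c1 c2 => simp [hC.counit_str]
      · simp
  coact_str := by
    intro x
    induction x using TensorProduct.induction_on with
    | zero => simp
    | add x y hx hy => simp only [map_add, hx, hy]
    | tmul u c =>
      simp [Gcoact, hC.comul_str]
      generalize hC.comul c = t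
      induction t using TensorProduct.induction_on with
      | zero => simp
      | add x y hx hy => simp only [map_add, tmul_add, hx, hy]
      | tmul c1 c2 => simp
  compat := by
    intro x a
    induction x using TensorProduct.induction_on with
    | zero => simp
    | add x y hx hy => simp only [map_add, LinearMap.add_apply, hx, hy]
    | tmul u c =>
      -- act on the triple tensor
      have key : ∀ t : C ⊗[k] C,
          (TensorProduct.assoc k U C C).symm (TensorProduct.map (d.act (d.str.symm u))
            (TensorProduct.map LinearMap.id hC.str.toLinearMap ∘ₗ
              TensorProduct.map₂ hC.act hC.act t)
            (TensorProduct.map hA.str.symm.toLinearMap hH.comul (hA.coact a))) =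
          TensorProduct.map₂ (Gact hA hC d.act) hC.act
            ((TensorProduct.assoc k U C C).symm
              (d.str.symm u ⊗ₜ TensorProduct.map LinearMap.id hC.str.toLinearMap t))
              (hA.coact a) := by
        intro t
        rw [← hA.hom_coassoc]
        generalize hA.coact a = s
        induction t using TensorProduct.induction_on with
        | zero => simp
        | add x y hx hy =>
          simp only [map_add, tmul_add, LinearMap.add_apply, ← hx, ← hy, LinearMap.comp_add,
            TensorProduct.map_add_right]
        | tmul c1 c2 =>
        induction s using TensorProduct.induction_on with
        | zero => simp
        | add x y hx hy => simp only [map_add, hx, hy]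
        | tmul a h =>
          simp [Gact]
          generalize hA.coact a = s
          induction s using TensorProduct.induction_on with
          | zero => simp
          | add x y hx hy => simp only [map_add, add_tmul, hx, hy]
          | tmul a g => simp [hC.str_act]
      have key' := key (hC.comul c)
      simp only [Gcoact, LinearMap.comp_apply, TensorProduct.map_tmul] at key' ⊢
      refine Eq.trans ?_ key'
      simp only [Gact_tmul]
      generalize hA.coact a = s
      induction s using TensorProduct.induction_on with
      | zero => simp
      | add x y hx hy => simp only [map_add, hx, hy]
      | tmul a h => simp [d.symm_act, hC.comul_act]

/-- forget the coaction -/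
def DoiMod.toHomMod {hA : HomComodAlg hH A} {hC : HomModCoalg hH C} (d : DoiMod hA hC U) :
    HomMod hA.toHomAlg U where
  str := d.str
  act := d.act
  act_act := d.act_act
  act_one := d.act_one
  str_act := d.str_act

theorem Gmod_map {V : Type*} [AddCommGroup V] [Module k V] (d : HomMod hA.toHomAlg U)
    (e : HomMod hA.toHomAlg V) (f : U →ₗ[k] V) (h1 : ∀ u, f (d.str u) = e.str (f u))
    (h2 : ∀ u a, f (d.act u a) = e.act (f u) a) :
    IsDoiHom (Gmod hA hC d) (Gmod hA hC e) (TensorProduct.map f LinearMap.id) where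
  str_comm := by
    intro x
    induction x using TensorProduct.induction_on with
    | zero => simp
    | add x y hx hy => simp only [map_add, hx, hy]
    | tmul u c => simp [Gmod, h1]
  act_comm := by
    intro x a
    induction x using TensorProduct.induction_on with
    | zero => simp
    | add x y hx hy => simp only [map_add, LinearMap.add_apply, hx, hy]
    | tmul u c =>
      simp [Gmod, Gact_tmul]
      generalize hA.coact a = s
      induction s using TensorProduct.induction_on with
      | zero => simp
      | add x y hx hy => simp only [map_add, hx, hy]
      | tmul a h => simp [h2]
  coact_comm := by
    intro x
    have h3 : ∀ u, f (d.str.symm u) = e.str.symm (f u) := by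
      intro u
      rw [LinearEquiv.eq_symm_apply, ← h1]; simp
    induction x using TensorProduct.induction_on with
    | zero => simp
    | add x y hx hy => simp only [map_add, hx, hy]
    | tmul u c =>
      simp [Gmod, Gcoact]
      generalize hC.comul c = t
      induction t using TensorProduct.induction_on with
      | zero => simp
      | add x y hx hy => simp only [map_add, tmul_add, hx, hy]
      | tmul c1 c2 => simp [h3]

theorem coact_isDoiHom {hA : HomComodAlg hH A} {hC : HomModCoalg hH C} (d : DoiMod hA hC U) :
    IsDoiHom d (Gmod hA hC d.toHomMod) d.coact where
  str_comm := by
    intro m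
    rw [d.coact_str]; rfl
  act_comm := by
    intro m a
    rw [d.compat]; rfl
  coact_comm := by
    intro m
    have h := congrArg (fun z => (TensorProduct.assoc k U C C).symm
      (TensorProduct.map LinearMap.id (TensorProduct.map LinearMap.id hC.str.toLinearMap) z))
      (d.hom_coassoc m)
    refine Eq.trans ?_ (h.symm.trans ?_)
    · simp only [Gmod, Gcoact, DoiMod.toHomMod, LinearMap.comp_apply, LinearEquiv.coe_coe]
      generalize d.coact m = t
      induction t using TensorProduct.induction_on with
      | zero => simp
      | add x y hx hy => simp only [map_add, hx, hy]
      | tmul c1 c2 => simp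
    · generalize d.coact m = t
      induction t using TensorProduct.induction_on with
      | zero => simp
      | add x y hx hy => simp only [map_add, hx, hy]
      | tmul m c =>
        simp
        generalize d.coact m = t
        induction t using TensorProduct.induction_on with
        | zero => simp
        | add x y hx hy => simp only [map_add, add_tmul, hx, hy]
        | tmul c1 c2 => simp

end helpers
end DoiHomHopf

namespace DoiHomHopf

section forward
variable {k : Type*} [CommRing k] {H A C : Type*}
    [AddCommGroup H] [Module k H] [AddCommGroup A] [Module k A] [AddCommGroup C] [Module k C]
    {hH : HomBialg k H} {hA : HomComodAlg hH A} {hC : HomModCoalg hH C}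
    {M : Type*} [AddCommGroup M] [Module k M]

theorem nu_str (I : NIntegral hA hC) (d : DoiMod hA hC M) (x : M ⊗[k] C) :
    nuMap I.θ d (TensorProduct.congr d.str hC.str x) = d.str (nuMap I.θ d x) := by
  induction x using TensorProduct.induction_on with
  | zero => simp
  | add x y hx hy => simp only [map_add, hx, hy]
  | tmul m c =>
    simp [nuMap, d.coact_str]
    generalize d.coact m = t
    induction t using TensorProduct.induction_on with
    | zero => simp
    | add x y hx hy => simp only [map_add, add_tmul, hx, hy]
    | tmul m e =>
      simp [d.str_act, ← I.θ_str]

theorem nu_act (I : NIntegral hA hC) (d : DoiMod hA hC M) (x : M ⊗[k] C) (a : A) :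
    nuMap I.θ d (Gact hA hC d.act x a) = d.act (nuMap I.θ d x) a := by
  induction x using TensorProduct.induction_on with
  | zero => simp
  | add x y hx hy => simp only [map_add, LinearMap.add_apply, hx, hy]
  | tmul m c =>
    have key : ∀ t : M ⊗[k] C, TensorProduct.lift d.act (TensorProduct.map d.str.toLinearMap I.θ
        (TensorProduct.assoc k M C C (TensorProduct.map (TensorProduct.map₂ d.act hC.act t)
          (hC.act (hC.str.symm c))
          (TensorProduct.map hA.coact hH.str.symm.toLinearMap (hA.coact a))))) =
        d.act (TensorProduct.lift d.act (TensorProduct.map d.str.toLinearMap I.θ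
        (TensorProduct.assoc k M C C (t ⊗ₜ hC.str.symm c)))) a := by
      intro t
      induction t using TensorProduct.induction_on with
      | zero => simp
      | add x y hx hy =>
        simp only [map_add, add_tmul, TensorProduct.map_add_left, LinearMap.add_apply, hx, hy]
      | tmul m e =>
        have h := congrArg (fun z => d.act (d.str (d.str m)) (hA.str.symm z))
          (I.cond3 a c (hC.str e))
        refine Eq.trans ?_ (h.trans ?_)
        · generalize TensorProduct.map hA.coact hH.str.symm.toLinearMap (hA.coact a) = w
          induction w using TensorProduct.induction_on with
          | zero => simp
          | add x y hx hy => simp only [map_add, hx, hy]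
          | tmul w h =>
            induction w using TensorProduct.induction_on with
            | zero => simp
            | add x y hx hy => simp only [map_add, add_tmul, hx, hy]
            | tmul a g =>
              simp [d.str_act, hA.symm_mul, ← d.act_act]
        · have h2 : I.θ (hC.str e ⊗ₜ c) = hA.str (I.θ (e ⊗ₜ hC.str.symm c)) := by
            rw [← I.θ_str]; simp
          simp [h2, hA.symm_mul, ← d.act_act]
    have key' := key (d.coact m)
    refine Eq.trans ?_ (key'.trans ?_)
    · simp only [Gact_tmul]
      generalize hA.coact a = s
      induction s using TensorProduct.induction_on with
      | zero => simp
      | add x y hx hy => simp only [map_add, hx, hy]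
      | tmul a h => simp [nuMap, d.compat, hC.symm_act]
    · simp [nuMap]

/-- the right-hand side of the first integral condition, on `d₁ ⊗ d₂` -/
noncomputable def cond1R (hA : HomComodAlg hH A) (hC : HomModCoalg hH C)
    (θ : C ⊗[k] C →ₗ[k] A) (c : C) : C ⊗[k] C →ₗ[k] A ⊗[k] C :=
  TensorProduct.map hA.str.toLinearMap (TensorProduct.lift hC.act) ∘ₗ
        (TensorProduct.assoc k A C H).toLinearMap ∘ₗ
          (TensorProduct.map (TensorProduct.comm k C A).toLinearMap LinearMap.id) ∘ₗ
            (TensorProduct.assoc k C A H).symm.toLinearMap ∘ₗ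
              (TensorProduct.map LinearMap.id
                (hA.coact ∘ₗ (TensorProduct.curry θ).flip (hC.str.symm c)))

theorem nu_coact (I : NIntegral hA hC) (d : DoiMod hA hC M) (x : M ⊗[k] C) :
    d.coact (nuMap I.θ d x) =
      TensorProduct.map (nuMap I.θ d) LinearMap.id (Gcoact hC.toHomCoalg d.str x) := by
  induction x using TensorProduct.induction_on with
  | zero => simp
  | add x y hx hy => simp only [map_add, hx, hy]
  | tmul m c =>
    let R := cond1R hA hC I.θ c
    let G : M ⊗[k] (C ⊗[k] C) →ₗ[k] M ⊗[k] C :=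
      TensorProduct.map (TensorProduct.lift d.act ∘ₗ
          TensorProduct.map d.str.toLinearMap hA.str.symm.toLinearMap) LinearMap.id ∘ₗ
        (TensorProduct.assoc k M A C).symm.toLinearMap ∘ₗ
        TensorProduct.map LinearMap.id
          (R ∘ₗ TensorProduct.map hC.str.toLinearMap hC.str.toLinearMap)
    have h := congrArg G (d.hom_coassoc m)
    refine Eq.trans ?_ (h.trans ?_)
    · simp only [nuMap, LinearMap.comp_apply, TensorProduct.map_tmul]
      generalize d.coact m = t
      induction t using TensorProduct.induction_on with
      | zero => simp
      | add x y hx hy => simp only [map_add, add_tmul, hx, hy]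
      | tmul m e =>
        have h2 : I.θ (e ⊗ₜ hC.str.symm c) =
          (TensorProduct.curry I.θ).flip (hC.str.symm c) e := by simp
        simp [d.compat, d.coact_str]
        generalize d.coact m = t
        induction t using TensorProduct.induction_on with
        | zero => simp
        | add x y hx hy => simp only [map_add, add_tmul, LinearMap.add_apply, hx, hy]
        | tmul m f =>
          simp [G, R, cond1R]
          generalize hA.coact (I.θ (e ⊗ₜ hC.str.symm c)) = s
          induction s using TensorProduct.induction_on with
          | zero => simp
          | add x y hx hy => simp only [map_add, tmul_add, hx, hy]
          | tmul a g => simp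
    · simp only [Gcoact, nuMap, LinearMap.comp_apply, TensorProduct.map_tmul]
      have h1 : ∀ e, R (TensorProduct.map hC.str.toLinearMap hC.str.toLinearMap (hC.comul e)) =
          TensorProduct.map (TensorProduct.curry I.θ e) hC.str.toLinearMap (hC.comul c) := by
        intro e
        have := I.cond1 c (hC.str e)
        rw [LinearEquiv.symm_apply_apply, hC.comul_str] at this
        exact this.symm
      have h4 : d.coact (d.str.symm m) =
          TensorProduct.map d.str.symm.toLinearMap hC.str.symm.toLinearMap (d.coact m) := by
        obtain ⟨m, rfl⟩ := d.str.surjective m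
        rw [d.coact_str, LinearEquiv.symm_apply_apply]
        generalize d.coact m = t
        induction t using TensorProduct.induction_on with
        | zero => simp
        | add x y hx hy => simp only [map_add, ← hx, ← hy]
        | tmul x y => simp
      have h5 : ∀ t : M ⊗[k] C, G (TensorProduct.map d.str.symm.toLinearMap hC.comul t) =
          TensorProduct.map (TensorProduct.lift d.act ∘ₗ TensorProduct.map d.str.toLinearMap I.θ ∘ₗ
            (TensorProduct.assoc k M C C).toLinearMap ∘ₗ
            TensorProduct.mk k (M ⊗[k] C) C
              (TensorProduct.map d.str.symm.toLinearMap hC.str.symm.toLinearMap t) ∘ₗ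
            hC.str.symm.toLinearMap) hC.str.toLinearMap (hC.comul c) := by
        intro t
        induction t using TensorProduct.induction_on with
        | zero => simp
        | add x y hx hy =>
          simp only [map_add, LinearMap.add_comp, LinearMap.comp_add,
            TensorProduct.map_add_left, LinearMap.add_apply, hx, hy]
        | tmul m e =>
          simp only [G, LinearMap.comp_apply, TensorProduct.map_tmul, h1]
          generalize hC.comul c = w
          induction w using TensorProduct.induction_on with
          | zero => simp
          | add x y hx hy => simp only [map_add, tmul_add, hx, hy]
          | tmul a b =>
            have h6 : I.θ (hC.str.symm e ⊗ₜ hC.str.symm a) = hA.str.symm (I.θ (e ⊗ₜ a)) := by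
              rw [LinearEquiv.eq_symm_apply, ← I.θ_str]; simp
            simp [h6]
      rw [h5]
      generalize hC.comul c = w
      induction w using TensorProduct.induction_on with
      | zero => simp
      | add x y hx hy => simp only [map_add, tmul_add, hx, hy]
      | tmul a b => simp [h4]

theorem nu_norm (I : NIntegral hA hC) (d : DoiMod hA hC M) (m : M) :
    nuMap I.θ d (d.coact m) = m := by
  have h := congrArg (fun z => TensorProduct.lift d.act (TensorProduct.map d.str.toLinearMap I.θ z))
    (d.hom_coassoc m)
  refine Eq.trans ?_ (h.trans ?_)
  · simp [nuMap]
  · have h2 := congrArg d.str (d.counit_coact m)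
    rw [LinearEquiv.apply_symm_apply] at h2
    refine Eq.trans ?_ h2
    generalize d.coact m = t
    induction t using TensorProduct.induction_on with
    | zero => simp
    | add x y hx hy => simp only [map_add, hx, hy]
    | tmul m c => simp [I.cond2, d.act_one]

theorem nu_nat (I : NIntegral hA hC) {N : Type*} [AddCommGroup N] [Module k N]
    (d : DoiMod hA hC M) (e : DoiMod hA hC N) (f : M →ₗ[k] N) (hf : IsDoiHom d e f)
    (x : M ⊗[k] C) :
    nuMap I.θ e (TensorProduct.map f LinearMap.id x) = f (nuMap I.θ d x) := by
  induction x using TensorProduct.induction_on with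
  | zero => simp
  | add x y hx hy => simp only [map_add, hx, hy]
  | tmul m c =>
    simp [nuMap, hf.coact_comm]
    generalize d.coact m = t
    induction t using TensorProduct.induction_on with
    | zero => simp
    | add x y hx hy => simp only [map_add, add_tmul, hx, hy]
    | tmul m e => simp [hf.act_comm, hf.str_comm]

end forward
end DoiHomHopf

namespace DoiHomHopf

section backward
variable {k : Type*} [CommRing k] {H A C : Type*}
    [AddCommGroup H] [Module k H] [AddCommGroup A] [Module k A] [AddCommGroup C] [Module k C]
    {U : Type*} [AddCommGroup U] [Module k U]

/-- shift-twisted free module: structure map `[n] a ↦ [n+1] β a`. -/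
noncomputable def Pstr (hA : HomAlg k A) : (ℤ →₀ A) ≃ₗ[k] (ℤ →₀ A) :=
  Finsupp.lcongr (Equiv.addRight (1 : ℤ)) hA.str

theorem Pstr_single (hA : HomAlg k A) (n : ℤ) (a : A) :
    Pstr hA (Finsupp.single n a) = Finsupp.single (n + 1) (hA.str a) := by
  simp [Pstr]

theorem Pstr_symm_single (hA : HomAlg k A) (n : ℤ) (a : A) :
    (Pstr hA).symm (Finsupp.single n a) = Finsupp.single (n - 1) (hA.str.symm a) := by
  rw [LinearEquiv.symm_apply_eq, Pstr_single]; simp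

/-- the action `([n] a) · b = [n+1] (a b)`. -/
noncomputable def Pact (hA : HomAlg k A) : (ℤ →₀ A) →ₗ[k] A →ₗ[k] (ℤ →₀ A) :=
  Finsupp.lsum k (fun n : ℤ => hA.mul.compr₂ (Finsupp.lsingle (n + 1)))

theorem Pact_single (hA : HomAlg k A) (n : ℤ) (a b : A) :
    Pact hA (Finsupp.single n a) b = Finsupp.single (n + 1) (hA.mul a b) := by
  simp [Pact]

/-- The free module with automorphism. -/
noncomputable def Pmod (hA : HomAlg k A) : HomMod hA (ℤ →₀ A) where
  str := Pstr hA
  act := Pact hA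
  act_act := by
    intro m a b
    induction m using Finsupp.induction_linear with
    | zero => simp
    | add x y hx hy => simp only [map_add, LinearMap.add_apply, hx, hy]
    | single n c => simp [Pact_single, Pstr_single, hA.hom_assoc]
  act_one := by
    intro m
    induction m using Finsupp.induction_linear with
    | zero => simp
    | add x y hx hy => simp only [map_add, LinearMap.add_apply, hx, hy]
    | single n c => simp [Pact_single, Pstr_single, hA.mul_one]
  str_act := by
    intro m a
    induction m using Finsupp.induction_linear with
    | zero => simp
    | add x y hx hy => simp only [map_add, LinearMap.add_apply, hx, hy]
    | single n c => simp [Pact_single, Pstr_single, hA.str_mul]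

/-- The map `P → U`, `[n] a ↦ μ^(n-1)(u) · β⁻¹ a`. -/
noncomputable def phi {hA : HomAlg k A} (d : HomMod hA U) (u : U) : (ℤ →₀ A) →ₗ[k] U :=
  Finsupp.lsum k (fun n : ℤ => d.act ((d.str ^ (n - 1)) u) ∘ₗ hA.str.symm.toLinearMap)

theorem phi_single {hA : HomAlg k A} (d : HomMod hA U) (u : U) (n : ℤ) (a : A) :
    phi d u (Finsupp.single n a) = d.act ((d.str ^ (n - 1)) u) (hA.str.symm a) := by
  simp [phi]

theorem str_zpow {hA : HomAlg k A} (d : HomMod hA U) (u : U) (n : ℤ) :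
    (d.str ^ (n + 1 - 1)) u = d.str ((d.str ^ (n - 1)) u) := by
  rw [← LinearEquiv.mul_apply, ← zpow_one_add]; congr 2; ring

theorem phi_str {hA : HomAlg k A} (d : HomMod hA U) (u : U) (p : ℤ →₀ A) :
    phi d u ((Pmod hA).str p) = d.str (phi d u p) := by
  induction p using Finsupp.induction_linear with
  | zero => simp
  | add x y hx hy => simp only [map_add, hx, hy]
  | single n c =>
    simp only [Pmod, Pstr_single, phi_single, str_zpow, d.str_act]; simp

theorem phi_act {hA : HomAlg k A} (d : HomMod hA U) (u : U) (p : ℤ →₀ A) (a : A) :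
    phi d u ((Pmod hA).act p a) = d.act (phi d u p) a := by
  induction p using Finsupp.induction_linear with
  | zero => simp
  | add x y hx hy => simp only [map_add, LinearMap.add_apply, hx, hy]
  | single n c =>
    simp only [Pmod, Pact_single, phi_single, str_zpow, hA.symm_mul, ← d.act_act]; simp

theorem phi_one {hA : HomAlg k A} (d : HomMod hA U) (u : U) :
    phi d u (Finsupp.single 0 hA.one) = u := by
  rw [phi_single, hA.symm_one, d.act_one, ← LinearEquiv.mul_apply, ← zpow_one_add]
  simp

theorem Pstr_zpow (hA : HomAlg k A) (n m : ℤ) (b : A) :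
    ((Pstr hA) ^ n) (Finsupp.single m b) = Finsupp.single (m + n) ((hA.str ^ n) b) := by
  induction n generalizing m b with
  | zero => simp
  | succ n ih =>
    rw [zpow_add_one, zpow_add_one, LinearEquiv.mul_apply, LinearEquiv.mul_apply, Pstr_single, ih]
    congr 1; ring
  | pred n ih =>
    rw [zpow_sub_one, zpow_sub_one, LinearEquiv.mul_apply, LinearEquiv.mul_apply]
    have : (Pstr hA)⁻¹ (Finsupp.single m b) = Finsupp.single (m - 1) ((hA.str)⁻¹ b) :=
      Pstr_symm_single hA m b
    rw [this, ih]
    congr 1; ring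

theorem proj_phi (hA : HomAlg k A) (j : ℤ) (b : A) (p : ℤ →₀ A) :
    phi (Pmod hA) (Finsupp.single j b) p (j + 1) = hA.mul b (hA.str.symm (p 1)) := by
  induction p using Finsupp.induction_linear with
  | zero => simp
  | add x y hx hy => simp only [map_add, Finsupp.add_apply, hx, hy]
  | single n a =>
    rw [phi_single]
    simp only [Pmod, Pstr_zpow, Pact_single, Finsupp.single_apply]
    by_cases hn : n = 1
    · subst hn; simp
    · rw [if_neg (by omega), if_neg hn]; simp

variable {hH : HomBialg k H} (hA : HomComodAlg hH A) (hC : HomModCoalg hH C)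

theorem proj_phi2 (e : C) (p : ℤ →₀ A) :
    TensorProduct.map (Finsupp.lapply (R := k) (1 : ℤ)) LinearMap.id
      (phi (Gmod hA hC (Pmod hA.toHomAlg)).toHomMod
        (Finsupp.single 0 hA.one ⊗ₜ[k] e) p) =
    TensorProduct.map LinearMap.id (hC.act e ∘ₗ hH.str.symm.toLinearMap) (hA.coact (p 1)) := by
  induction p using Finsupp.induction_linear with
  | zero => simp
  | add x y hx hy => simp only [map_add, Finsupp.add_apply, hx, hy]
  | single n a =>
    have hs : hA.coact (hA.str.symm a) =
        TensorProduct.map hA.str.symm.toLinearMap hH.str.symm.toLinearMap (hA.coact a) := by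
      obtain ⟨a, rfl⟩ := hA.str.surjective a
      rw [hA.coact_str, LinearEquiv.symm_apply_apply]
      generalize hA.coact a = t
      induction t using TensorProduct.induction_on with
      | zero => simp
      | add x y hx hy => simp only [map_add, ← hx, ← hy]
      | tmul x y => simp
    rw [phi_single]
    simp only [Gmod, DoiMod.toHomMod, TensorProduct.congr_zpow, TensorProduct.congr_tmul,
      Gact_tmul, hs]
    simp only [Pmod, Pstr_zpow]
    by_cases hn : n = 1
    · subst hn
      simp only [Finsupp.single_eq_same]
      generalize hA.coact a = t
      induction t using TensorProduct.induction_on with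
      | zero => simp
      | add x y hx hy => simp only [map_add, hx, hy]
      | tmul x y => simp [Pact_single, hA.one_mul]
    · rw [Finsupp.single_apply, if_neg hn]
      generalize hA.coact a = t
      induction t using TensorProduct.induction_on with
      | zero => simp
      | add x y hx hy => simp only [map_add, hx, hy]; simp
      | tmul x y => simp [Pact_single, Finsupp.single_apply, hn]

/-- `proj_n ⊗ ε` -/
noncomputable def En (n : ℤ) : (ℤ →₀ A) ⊗[k] C →ₗ[k] A :=
  (TensorProduct.rid k A).toLinearMap ∘ₗ
    TensorProduct.map (Finsupp.lapply (R := k) n) hC.counit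

theorem En_tmul (n : ℤ) (p : ℤ →₀ A) (c : C) : En (A := A) hC n (p ⊗ₜ c) = hC.counit c • p n := by
  simp [En]

theorem En_str (n : ℤ) (z : (ℤ →₀ A) ⊗[k] C) :
    En hC (n + 1) ((Gmod hA hC (Pmod hA.toHomAlg)).str z) = hA.str (En hC n z) := by
  induction z using TensorProduct.induction_on with
  | zero => simp
  | add x y hx hy => simp only [map_add, hx, hy]
  | tmul p c =>
    induction p using Finsupp.induction_linear with
    | zero => simp
    | add x y hx hy => simp only [map_add, add_tmul, hx, hy]
    | single m a =>
      by_cases h : m = n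
      · subst h; simp [Gmod, Pmod, Pstr_single, En_tmul, hC.counit_str]
      · simp [Gmod, Pmod, Pstr_single, En_tmul, hC.counit_str, Finsupp.single_apply, h]

theorem En_act (n : ℤ) (z : (ℤ →₀ A) ⊗[k] C) (a : A) :
    En hC (n + 1) (Gact hA hC (Pact hA.toHomAlg) z (hA.str a)) = hA.mul (En hC n z) a := by
  induction z using TensorProduct.induction_on with
  | zero => simp
  | add x y hx hy => simp only [map_add, LinearMap.add_apply, hx, hy]
  | tmul p c =>
    induction p using Finsupp.induction_linear with
    | zero => simp
    | add x y hx hy => simp only [map_add, add_tmul, LinearMap.add_apply, hx, hy]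
    | single m b =>
      have h := congrArg (fun w => hA.mul (hC.counit c • Finsupp.single m b n) (hA.str w))
        (hA.counit_coact a)
      simp only [LinearEquiv.apply_symm_apply] at h
      rw [En_tmul, ← h, Gact_tmul, hA.coact_str]
      generalize hA.coact a = t
      induction t using TensorProduct.induction_on with
      | zero => simp
      | add x y hx hy => simp only [map_add, hx, hy]
      | tmul x y =>
        by_cases h : m = n
        · subst h; simp [Pact_single, En_tmul, hC.counit_act, hH.counit_str, smul_smul, mul_comm]
        · simp [Pact_single, En_tmul, Finsupp.single_apply, h]

end backward
end DoiHomHopf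

namespace DoiHomHopf
section backward2
variable {k : Type u} [CommRing k] {H A C : Type v}
    [AddCommGroup H] [Module k H] [AddCommGroup A] [Module k A] [AddCommGroup C] [Module k C]
    {hH : HomBialg k H} (hA : HomComodAlg hH A) (hC : HomModCoalg hH C)

theorem En_phi (j : ℤ) (b : A) (z : (ℤ →₀ A) ⊗[k] C) :
    En hC (j + 1) (TensorProduct.map (phi (Pmod hA.toHomAlg) (Finsupp.single j b)) LinearMap.id z) =
      hA.mul b (hA.str.symm (En hC 1 z)) := by
  induction z using TensorProduct.induction_on with
  | zero => simp
  | add x y hx hy => simp only [map_add, hx, hy]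
  | tmul p c => simp [En_tmul, proj_phi]

/-- `(proj_1 ⊗ id) ⊗ ε`. -/
noncomputable def Q : ((ℤ →₀ A) ⊗[k] C) ⊗[k] C →ₗ[k] A ⊗[k] C :=
  (TensorProduct.rid k (A ⊗[k] C)).toLinearMap ∘ₗ
    TensorProduct.map (TensorProduct.map (Finsupp.lapply (R := k) (1 : ℤ)) LinearMap.id) hC.counit

theorem Q_coact (z : (ℤ →₀ A) ⊗[k] C) :
    Q hC ((Gmod hA hC (Pmod hA.toHomAlg)).coact z) =
      TensorProduct.map (En hC 1) hC.str.symm.toLinearMap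
        ((Gmod hA hC (Pmod hA.toHomAlg)).coact z) := by
  induction z using TensorProduct.induction_on with
  | zero => simp
  | add x y hx hy => simp only [map_add, hx, hy]
  | tmul p c =>
    have h1 := congrArg (fun w => ((Pstr hA.toHomAlg).symm p) 1 ⊗ₜ[k] w) (hC.counit_comul_right c)
    have h2 := congrArg (fun w => ((Pstr hA.toHomAlg).symm p) 1 ⊗ₜ[k] w) (hC.counit_comul_left c)
    refine Eq.trans ?_ (h1.trans (h2.symm.trans ?_))
    · simp only [Gmod, Gcoact, LinearMap.comp_apply, TensorProduct.map_tmul, Pmod]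
      generalize hC.comul c = t
      induction t using TensorProduct.induction_on with
      | zero => simp
      | add x y hx hy => simp only [map_add, tmul_add, hx, hy]
      | tmul x y => simp [Q, hC.counit_str]
    · simp only [Gmod, Gcoact, LinearMap.comp_apply, TensorProduct.map_tmul, Pmod]
      generalize hC.comul c = t
      induction t using TensorProduct.induction_on with
      | zero => simp
      | add x y hx hy => simp only [map_add, tmul_add, hx, hy]
      | tmul x y => simp [En_tmul, smul_tmul]

theorem Q_phi (e : C) (z : (ℤ →₀ A) ⊗[k] C) :
    Q hC (TensorProduct.map (phi (Gmod hA hC (Pmod hA.toHomAlg)).toHomMod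
        (Finsupp.single 0 hA.one ⊗ₜ[k] e)) LinearMap.id z) =
    TensorProduct.map LinearMap.id (hC.act e ∘ₗ hH.str.symm.toLinearMap)
      (hA.coact (En hC 1 z)) := by
  induction z using TensorProduct.induction_on with
  | zero => simp
  | add x y hx hy => simp only [map_add, hx, hy]
  | tmul p c => simp [En_tmul, Q, proj_phi2]

theorem exists_integral
    (ν : ∀ (M : Type v) [AddCommGroup M] [Module k M], DoiMod hA hC M → ((M ⊗[k] C) →ₗ[k] M))
    (hν : ∀ (M : Type v) [AddCommGroup M] [Module k M] (d : DoiMod hA hC M),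
          (∀ x : M ⊗[k] C, ν M d (TensorProduct.congr d.str hC.str x) = d.str (ν M d x)) ∧
          (∀ (x : M ⊗[k] C) (a : A), ν M d (Gact hA hC d.act x a) = d.act (ν M d x) a) ∧
          (∀ x : M ⊗[k] C, d.coact (ν M d x) =
            TensorProduct.map (ν M d) LinearMap.id (Gcoact hC.toHomCoalg d.str x)) ∧
          (∀ m : M, ν M d (d.coact m) = m))
    (nat : ∀ (M N : Type v) [AddCommGroup M] [Module k M] [AddCommGroup N] [Module k N]
          (dM : DoiMod hA hC M) (dN : DoiMod hA hC N) (f : M →ₗ[k] N),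
          IsDoiHom dM dN f →
          ∀ x : M ⊗[k] C, ν N dN (TensorProduct.map f LinearMap.id x) = f (ν M dM x)) :
    Nonempty (NIntegral hA hC) := by
  obtain ⟨νP, hνP⟩ : ∃ x, x = ν _ (Gmod hA hC (Pmod hA.toHomAlg)) := ⟨_, rfl⟩
  obtain ⟨n1, n2, n3, n4⟩ := hν _ (Gmod hA hC (Pmod hA.toHomAlg))
  rw [← hνP] at n1 n2 n3 n4
  let one : ℤ →₀ A := Finsupp.single 0 hA.one
  let θ : C ⊗[k] C →ₗ[k] A := En hC 1 ∘ₗ νP ∘ₗ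
    TensorProduct.map (TensorProduct.mk k _ C one) hC.str.toLinearMap
  have θ_def : ∀ d c, θ (d ⊗ₜ c) = En hC 1 (νP ((one ⊗ₜ d) ⊗ₜ hC.str c)) := by
    intro d c; simp [θ]
  have K : ∀ (U : Type v) [AddCommGroup U] [Module k U] (e : HomMod hA.toHomAlg U) (u : U)
      (d c : C), ν _ (Gmod hA hC e) ((u ⊗ₜ d) ⊗ₜ c) =
        TensorProduct.map (phi e u) LinearMap.id (νP ((one ⊗ₜ d) ⊗ₜ c)) := by
    intro U _ _ e u d c
    have := nat _ _ _ _ _ (Gmod_map hA hC (Pmod hA.toHomAlg) e (phi e u) (phi_str e u)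
      (phi_act e u)) ((one ⊗ₜ d) ⊗ₜ c)
    rw [← hνP] at this
    rw [← this]
    simp [one, phi_one]
  have K2 : ∀ (j : ℤ) (b : A) (d c : C), En hC (j + 1)
      (νP ((Finsupp.single j b ⊗ₜ d) ⊗ₜ hC.str c)) = hA.mul b (hA.str.symm (θ (d ⊗ₜ c))) := by
    intro j b d c
    rw [θ_def, ← En_phi, ← K, hνP]
  have θ_str : ∀ c d, θ (hC.str c ⊗ₜ[k] hC.str d) = hA.str (θ (c ⊗ₜ[k] d)) := by
    intro c d
    have h := K2 1 hA.one (hC.str c) (hC.str d)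
    rw [hA.one_mul, LinearEquiv.apply_symm_apply] at h
    rw [← h, θ_def, ← En_str, ← n1]
    simp [Gmod, Pmod, one, Pstr_single, hA.str_one]
  have θ_symm : ∀ c d, θ (hC.str.symm c ⊗ₜ[k] hC.str.symm d) = hA.str.symm (θ (c ⊗ₜ[k] d)) := by
    intro c d
    rw [LinearEquiv.eq_symm_apply, ← θ_str]; simp
  have ρone : ∀ c, (Gmod hA hC (Pmod hA.toHomAlg)).coact (Finsupp.single 1 hA.one ⊗ₜ c) =
      TensorProduct.map (TensorProduct.mk k _ C one) hC.str.toLinearMap (hC.comul c) := by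
    intro c
    simp only [Gmod, Gcoact, LinearMap.comp_apply, TensorProduct.map_tmul]
    generalize hC.comul c = t
    induction t using TensorProduct.induction_on with
    | zero => simp
    | add x y hx hy => simp only [map_add, tmul_add, hx, hy]
    | tmul x y => simp [Pmod, Pstr_symm_single, hA.symm_one, one]
  refine ⟨⟨θ, θ_str, ?_, ?_, ?_⟩⟩
  · intro c d
    have hz1 := n3 ((Finsupp.single 1 hA.one ⊗ₜ d) ⊗ₜ hC.str c)
    have hz2 := nat _ _ _ _ _ (coact_isDoiHom (Gmod hA hC (Pmod hA.toHomAlg)))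
      ((Finsupp.single 1 hA.one ⊗ₜ d) ⊗ₜ hC.str c)
    rw [← hνP] at hz2
    have hz3 := Q_coact hA hC (νP ((Finsupp.single 1 hA.one ⊗ₜ d) ⊗ₜ hC.str c))
    have hz4 := (congrArg (TensorProduct.map (En hC 1) hC.str.symm.toLinearMap) hz1).symm.trans
      (hz3.symm.trans (congrArg (Q hC) hz2.symm))
    refine Eq.trans ?_ (hz4.trans ?_)
    · simp only [Gcoact, LinearMap.comp_apply, TensorProduct.map_tmul, hC.comul_str]
      generalize hC.comul c = t
      induction t using TensorProduct.induction_on with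
      | zero => simp
      | add x y hx hy => simp only [map_add, tmul_add, hx, hy]
      | tmul x y => simp [θ_def, Gmod, Pmod, Pstr_symm_single, hA.symm_one, one]
    · simp only [TensorProduct.map_tmul, ρone]
      generalize hC.comul d = t
      induction t using TensorProduct.induction_on with
      | zero => simp
      | add x y hx hy => simp only [map_add, add_tmul, hx, hy]
      | tmul x y =>
        have h1 : θ (hC.str y ⊗ₜ c) = hA.str (θ (y ⊗ₜ hC.str.symm c)) := by
          rw [← θ_str]; simp
        simp only [TensorProduct.map_tmul, TensorProduct.mk_apply, LinearMap.id_apply,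
          LinearEquiv.coe_coe, K, one]
        rw [Q_phi, ← θ_def, h1, hA.coact_str]
        simp
        generalize hA.coact (θ (y ⊗ₜ hC.str.symm c)) = s
        induction s using TensorProduct.induction_on with
        | zero => simp
        | add x y hx hy => simp only [map_add, tmul_add, hx, hy]
        | tmul a h => simp
  · intro c
    have h := congrArg (En hC 1) (n4 (Finsupp.single 1 hA.one ⊗ₜ c))
    rw [ρone, En_tmul, Finsupp.single_eq_same] at h
    exact h
  · intro a c d
    have h := En_act hA hC 1 (νP ((one ⊗ₜ d) ⊗ₜ hC.str c)) a
    rw [← θ_def] at h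
    refine Eq.trans ?_ h
    have h2 := n2 ((one ⊗ₜ d) ⊗ₜ hC.str c) (hA.str a)
    refine Eq.trans ?_ (congrArg _ h2)
    rw [Gact_tmul, hA.coact_str]
    generalize hA.coact a = s
    induction s using TensorProduct.induction_on with
    | zero => simp
    | add x y hx hy => simp only [map_add, hx, hy]
    | tmul a g =>
      simp [Gmod, Gact_tmul, hA.coact_str, ← hC.str_act]
      generalize hA.coact a = s
      induction s using TensorProduct.induction_on with
      | zero => simp
      | add x y hx hy => simp only [map_add, add_tmul, hx, hy]
      | tmul a h =>
        have h3 : hC.act (hC.str.symm d) h = hC.str.symm (hC.act d (hH.str h)) := by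
          rw [hC.symm_act]; simp
        have h4 : hC.act (hC.str.symm c) (hH.str.symm g) = hC.str.symm (hC.act c g) := by
          rw [hC.symm_act]
        have h5 := K2 1 (hA.str (hA.str a)) (hC.act d (hH.str h)) (hC.act c g)
        simp [h3, h4, θ_symm, ← h5, Pmod, one, Pact_single, hA.one_mul]

end backward2
end DoiHomHopf

/-- Main theorem: a Doi Hom-Hopf datum `(H, A, C)` admits a normalized
`(A, β)`-integral iff the forgetful functor is separable, i.e. iff there is a natural
retraction `ν_M : M ⊗ C → M` of the unit of the adjunction, compatible with all the
structure. -/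
theorem separability_iff_integral {k : Type u} [CommRing k] {H A C : Type v}
    [AddCommGroup H] [Module k H] [AddCommGroup A] [Module k A] [AddCommGroup C] [Module k C]
    (hH : HomHopf k H) (hA : HomComodAlg hH.toHomBialg A) (hC : HomModCoalg hH.toHomBialg C) :
    Nonempty (NIntegral hA hC) ↔
      ∃ ν : ∀ (M : Type v) [AddCommGroup M] [Module k M], DoiMod hA hC M → ((M ⊗[k] C) →ₗ[k] M),
        (∀ (M : Type v) [AddCommGroup M] [Module k M] (d : DoiMod hA hC M),
          (∀ x : M ⊗[k] C, ν M d (TensorProduct.congr d.str hC.str x) = d.str (ν M d x)) ∧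
          (∀ (x : M ⊗[k] C) (a : A), ν M d (Gact hA hC d.act x a) = d.act (ν M d x) a) ∧
          (∀ x : M ⊗[k] C, d.coact (ν M d x) =
            TensorProduct.map (ν M d) LinearMap.id (Gcoact hC.toHomCoalg d.str x)) ∧
          (∀ m : M, ν M d (d.coact m) = m)) ∧
        (∀ (M N : Type v) [AddCommGroup M] [Module k M] [AddCommGroup N] [Module k N]
          (dM : DoiMod hA hC M) (dN : DoiMod hA hC N) (f : M →ₗ[k] N),
          IsDoiHom dM dN f →
          ∀ x : M ⊗[k] C, ν N dN (TensorProduct.map f LinearMap.id x) = f (ν M dM x)) := by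
  constructor
  · rintro ⟨I⟩
    exact ⟨fun M _ _ d => nuMap I.θ d,
      fun M _ _ d => ⟨nu_str I d, nu_act I d, nu_coact I d, nu_norm I d⟩,
      fun M N _ _ _ _ dM dN f hf x => nu_nat I dM dN f hf x⟩
  · rintro ⟨ν, hν, nat⟩
    exact exists_integral hA hC ν hν nat
end

section
/- Let (H, α) be a monoidal Hom-Hopf algebra over k and let (M, μ) be simultaneously a right (H,α)-Hom-module (action m·h) and a right (H,α)-Hom-comodule (coaction ρ(m) = m₀⊗m₁). Then the Hom-Yetter-Drinfeld compatibility condition m₀·h₁ ⊗ m₁h₂ = μ((μ⁻¹(m)·h₂)₀) ⊗ h₁(μ⁻¹(m)·h₂)₁ (for all h ∈ H, m ∈ M) holds if and only if ρ(m·h) = m₀·α((h₂)₁) ⊗ S(h₁)(α⁻¹(m₁)(h₂)₂) (for all h ∈ H, m ∈ M). -/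
open TensorProduct

open DoiHomHopf


namespace DoiHomHopf

section Aux

variable {k : Type*} [CommRing k] {H M : Type*}
    [AddCommGroup H] [Module k H] [AddCommGroup M] [Module k M]

/-- Left multiplication on the second factor of `M ⊗ H`. -/
noncomputable def Lm (M : Type*) [AddCommGroup M] [Module k M] (hH : HomHopf k H) :
    H →ₗ[k] (M ⊗[k] H) →ₗ[k] (M ⊗[k] H) :=
  LinearMap.lTensorHom M ∘ₗ hH.mul

@[simp] theorem Lm_tmul (hH : HomHopf k H) (a b : H) (m : M) :
    Lm M hH a (m ⊗ₜ[k] b) = m ⊗ₜ[k] hH.mul a b := by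
  simp [Lm]

/-- `Φ_T f h = f(h₂)₀ ⊗ T(h₁) f(h₂)₁`. -/
noncomputable def Ph (hH : HomHopf k H) (T : H →ₗ[k] H) (f : H →ₗ[k] M ⊗[k] H) :
    H →ₗ[k] M ⊗[k] H :=
  TensorProduct.lift ((Lm M hH).compl₁₂ T f) ∘ₗ hH.comul

theorem Lm_Lm (hH : HomHopf k H) (a b : H) (x : M ⊗[k] H) :
    Lm M hH (hH.str a) (Lm M hH b x) =
      Lm M hH (hH.mul a b) (TensorProduct.map LinearMap.id hH.str.toLinearMap x) := by
  induction x with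
  | zero => simp
  | tmul m c => simp [hH.hom_assoc]
  | add x y hx hy => simp only [map_add, hx, hy]

theorem Lm_one (hH : HomHopf k H) (x : M ⊗[k] H) :
    Lm M hH hH.one x = TensorProduct.map LinearMap.id hH.str.toLinearMap x := by
  induction x with
  | zero => simp
  | tmul m c => simp [hH.one_mul]
  | add x y hx hy => simp only [map_add, hx, hy]

theorem Lm_map (hH : HomHopf k H) (a : H) (g : M →ₗ[k] M) (x : M ⊗[k] H) :
    Lm M hH a (TensorProduct.map g LinearMap.id x) =
      TensorProduct.map g LinearMap.id (Lm M hH a x) := by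
  induction x with
  | zero => simp
  | tmul m c => simp
  | add x y hx hy => simp only [map_add, hx, hy]

theorem Ph_map (hH : HomHopf k H) (T : H →ₗ[k] H) (f : H →ₗ[k] M ⊗[k] H) (g : M →ₗ[k] M) :
    Ph hH T (TensorProduct.map g LinearMap.id ∘ₗ f) =
      TensorProduct.map g LinearMap.id ∘ₗ Ph hH T f := by
  ext h
  simp only [Ph, LinearMap.comp_apply]
  induction hH.comul h with
  | zero => simp
  | tmul a b => simp [Lm_map]
  | add x y hx hy => simp only [map_add, hx, hy]

theorem Ph_Ph (hH : HomHopf k H) (T T' : H →ₗ[k] H)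
    (hT : ∀ h, T (hH.str h) = hH.str (T h))
    (hTT : ∀ h, TensorProduct.lift hH.mul (TensorProduct.map T T' (hH.comul h)) =
      hH.counit h • hH.one) (f : H →ₗ[k] M ⊗[k] H) (h : H) :
    Ph hH T (Ph hH T' f) h =
      TensorProduct.map LinearMap.id (hH.str.toLinearMap ∘ₗ hH.str.toLinearMap)
        (f (hH.str.symm (hH.str.symm h))) := by
  let K : H ⊗[k] (H ⊗[k] H) →ₗ[k] M ⊗[k] H :=
    TensorProduct.lift ((Lm M hH).compl₁₂ (T ∘ₗ hH.str.toLinearMap)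
      (TensorProduct.lift ((Lm M hH).compl₁₂ T' f)))
  have h1 : Ph hH T (Ph hH T' f) h =
      K (TensorProduct.map hH.str.symm.toLinearMap hH.comul (hH.comul h)) := by
    simp only [Ph, LinearMap.comp_apply]
    induction hH.comul h with
    | zero => simp
    | tmul a b => simp [K]
    | add x y hx hy => simp only [map_add, hx, hy]
  have h2 : ∀ (x : H ⊗[k] H) (b : H), K (TensorProduct.assoc k H H H (x ⊗ₜ[k] b)) =
      Lm M hH (TensorProduct.lift hH.mul (TensorProduct.map T T' x))
        (TensorProduct.map LinearMap.id hH.str.toLinearMap (f b)) := by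
    intro x b
    induction x with
    | zero => simp
    | tmul a c => simp [K, hT, Lm_Lm]
    | add x y hx hy => simp only [TensorProduct.add_tmul, map_add, hx, hy, LinearMap.add_apply]
  rw [h1, hH.hom_coassoc, ← hH.counit_comul_left h]
  induction hH.comul h with
  | zero => simp
  | tmul a b =>
    rw [TensorProduct.map_tmul, h2, hTT]
    simp only [map_smul, LinearMap.smul_apply, Lm_one, TensorProduct.map_tmul,
      TensorProduct.lid_tmul, LinearMap.id_apply, LinearEquiv.coe_coe]
    rw [← LinearMap.comp_apply, ← TensorProduct.map_comp, LinearMap.id_comp]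
  | add x y hx hy => simp only [map_add, hx, hy]

/-- The abstract inversion. -/
theorem Ph_inv (hH : HomHopf k H) (μ : M ≃ₗ[k] M) (T T' : H →ₗ[k] H)
    (hT : ∀ h, T (hH.str h) = hH.str (T h))
    (hTT : ∀ h, TensorProduct.lift hH.mul (TensorProduct.map T T' (hH.comul h)) =
      hH.counit h • hH.one) (F G : M → H →ₗ[k] M ⊗[k] H)
    (hF : ∀ m h, F (μ m) (hH.str h) =
      TensorProduct.map μ.toLinearMap hH.str.toLinearMap (F m h))
    (hG : ∀ m h, G m h = TensorProduct.map μ.toLinearMap LinearMap.id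
      (Ph hH T' (F (μ.symm m)) h)) (m : M) (h : H) :
    F m h = TensorProduct.map μ.toLinearMap LinearMap.id (Ph hH T (G (μ.symm m)) h) := by
  have e : G (μ.symm m) = TensorProduct.map μ.toLinearMap LinearMap.id ∘ₗ
      Ph hH T' (F (μ.symm (μ.symm m))) := by
    ext x; exact hG _ _
  obtain ⟨n, rfl⟩ := μ.surjective m
  obtain ⟨n, rfl⟩ := μ.surjective n
  obtain ⟨g, rfl⟩ := hH.str.surjective h
  obtain ⟨g, rfl⟩ := hH.str.surjective g
  rw [e, Ph_map, LinearMap.comp_apply, Ph_Ph hH T T' hT hTT, hF, hF]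
  simp only [LinearEquiv.symm_apply_apply]
  induction F n g with
  | zero => simp
  | tmul a b => simp
  | add x y hx hy => simp only [map_add, hx, hy]

/-- `X_m(h) = m₀ h₁ ⊗ m₁ h₂`. -/
noncomputable def Xm (hH : HomHopf k H) (act : M →ₗ[k] H →ₗ[k] M) (x : M ⊗[k] H) :
    H →ₗ[k] M ⊗[k] H :=
  TensorProduct.map₂ act hH.mul x ∘ₗ hH.comul

theorem Xm_str (hH : HomHopf k H) (mM : HomMod hH.toHomBialg.toHomAlg M)
    (x : M ⊗[k] H) (h : H) :
    Xm hH mM.act (TensorProduct.map mM.str.toLinearMap hH.str.toLinearMap x) (hH.str h) =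
      TensorProduct.map mM.str.toLinearMap hH.str.toLinearMap (Xm hH mM.act x h) := by
  simp only [Xm, LinearMap.comp_apply, hH.comul_str]
  induction hH.comul h with
  | zero => simp
  | tmul a b =>
    induction x with
    | zero => simp
    | tmul m c => simp [hH.str_mul, mM.str_act]
    | add x y hx hy => simp only [map_add, hx, hy, LinearMap.add_apply]
  | add x y hx hy => simp only [map_add, hx, hy]

theorem lhs_form (hH : HomHopf k H) (μ : M →ₗ[k] M) (f : H →ₗ[k] M ⊗[k] H) (h : H) :
    TensorProduct.map μ (TensorProduct.lift hH.mul)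
            ((TensorProduct.assoc k M H H)
              (TensorProduct.map (TensorProduct.comm k H M).toLinearMap LinearMap.id
                ((TensorProduct.assoc k H M H).symm
                  (TensorProduct.map LinearMap.id f (hH.comul h))))) =
    TensorProduct.map μ LinearMap.id (Ph hH LinearMap.id f h) := by
  simp only [Ph, LinearMap.comp_apply]
  induction hH.comul h with
  | zero => simp
  | tmul a b =>
    simp only [TensorProduct.map_tmul, TensorProduct.lift.tmul, LinearMap.compl₁₂_apply,
      LinearMap.id_apply]
    induction f b with
    | zero => simp
    | tmul m c => simp
    | add x y hx hy => simp only [map_add, hx, hy, TensorProduct.tmul_add]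
  | add x y hx hy => simp only [map_add, hx, hy]

theorem rhs_form (hH : HomHopf k H) (mM : HomMod hH.toHomBialg.toHomAlg M)
    (z : M ⊗[k] H) (h : H) :
    (TensorProduct.map LinearMap.id (TensorProduct.lift hH.mul) ∘ₗ
            (TensorProduct.assoc k M H H).toLinearMap ∘ₗ
            TensorProduct.map
              (TensorProduct.map (TensorProduct.lift (mM.act.compl₂ hH.str.toLinearMap)) hH.S ∘ₗ
                (TensorProduct.assoc k M H H).symm.toLinearMap ∘ₗ
                TensorProduct.map LinearMap.id (TensorProduct.comm k H H).toLinearMap)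
              (TensorProduct.lift (hH.mul ∘ₗ hH.str.symm.toLinearMap)) ∘ₗ
            (TensorProduct.tensorTensorTensorComm k M H (H ⊗[k] H) H).toLinearMap)
            ((TensorProduct.map mM.str.toLinearMap hH.str.toLinearMap z) ⊗ₜ[k]
              ((TensorProduct.assoc k H H H).symm
                (TensorProduct.map LinearMap.id hH.comul (hH.comul h)))) =
    TensorProduct.map mM.str.toLinearMap LinearMap.id (Ph hH hH.S (Xm hH mM.act z) h) := by
  simp only [Ph, LinearMap.comp_apply]
  induction hH.comul h with
  | zero => simp
  | tmul a b =>
    simp only [TensorProduct.map_tmul, TensorProduct.lift.tmul, LinearMap.compl₁₂_apply,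
      LinearMap.id_apply, Xm, LinearMap.comp_apply]
    induction hH.comul b with
    | zero => simp
    | tmul c d =>
      induction z with
      | zero => simp
      | tmul m e => simp [mM.str_act]
      | add x y hx hy =>
        simp only [map_add, hx, hy, TensorProduct.add_tmul, LinearMap.add_apply]
    | add x y hx hy => simp only [map_add, hx, hy, TensorProduct.tmul_add]
  | add x y hx hy => simp only [map_add, hx, hy, TensorProduct.tmul_add]

end Aux

end DoiHomHopf

/-- For `(M, μ)` simultaneously a right `(H, α)`-Hom-module and a right
`(H, α)`-Hom-comodule, the Hom-Yetter-Drinfeld compatibility condition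
`m₀ · h₁ ⊗ m₁h₂ = μ((μ⁻¹(m) · h₂)₀) ⊗ h₁(μ⁻¹(m) · h₂)₁` holds iff
`ρ(m · h) = m₀ · α((h₂)₁) ⊗ S(h₁)(α⁻¹(m₁)(h₂)₂)` holds. -/
theorem hYD_conditions_equiv {k : Type*} [CommRing k] {H M : Type*}
    [AddCommGroup H] [Module k H] [AddCommGroup M] [Module k M]
    (hH : HomHopf k H)
    (mM : HomMod hH.toHomBialg.toHomAlg M) (cM : HomComod hH.toHomBialg.toHomCoalg M)
    (hstr : mM.str = cM.str) :
    (∀ (m : M) (h : H),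
        TensorProduct.map₂ mM.act hH.mul (cM.coact m) (hH.comul h) =
          TensorProduct.map mM.str.toLinearMap (TensorProduct.lift hH.mul)
            ((TensorProduct.assoc k M H H)
              (TensorProduct.map (TensorProduct.comm k H M).toLinearMap LinearMap.id
                ((TensorProduct.assoc k H M H).symm
                  (TensorProduct.map LinearMap.id (cM.coact ∘ₗ mM.act (mM.str.symm m))
                    (hH.comul h)))))) ↔
    (∀ (m : M) (h : H),
        cM.coact (mM.act m h) =
          (TensorProduct.map LinearMap.id (TensorProduct.lift hH.mul) ∘ₗ
            (TensorProduct.assoc k M H H).toLinearMap ∘ₗ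
            TensorProduct.map
              (TensorProduct.map (TensorProduct.lift (mM.act.compl₂ hH.str.toLinearMap)) hH.S ∘ₗ
                (TensorProduct.assoc k M H H).symm.toLinearMap ∘ₗ
                TensorProduct.map LinearMap.id (TensorProduct.comm k H H).toLinearMap)
              (TensorProduct.lift (hH.mul ∘ₗ hH.str.symm.toLinearMap)) ∘ₗ
            (TensorProduct.tensorTensorTensorComm k M H (H ⊗[k] H) H).toLinearMap)
            ((cM.coact m) ⊗ₜ[k]
              ((TensorProduct.assoc k H H H).symm
                (TensorProduct.map LinearMap.id hH.comul (hH.comul h))))) := by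
  have cs : ∀ m, cM.coact (mM.str m) =
      TensorProduct.map mM.str.toLinearMap hH.str.toLinearMap (cM.coact m) := by
    intro m; rw [hstr]; exact cM.coact_str m
  have r := fun (m : M) (h : H) => rhs_form hH mM (cM.coact (mM.str.symm m)) h
  simp only [← cs, LinearEquiv.apply_symm_apply] at r
  simp only [r, lhs_form]
  constructor
  · intro H1
    exact Ph_inv hH mM.str hH.S LinearMap.id hH.S_str hH.S_mul_comul
      (fun m => cM.coact ∘ₗ mM.act m) (fun m => Xm hH mM.act (cM.coact m))
      (fun m h => by
        simp only [LinearMap.comp_apply]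
        rw [← cs, mM.str_act]) H1
  · intro H2
    exact Ph_inv hH mM.str LinearMap.id hH.S (fun _ => rfl) hH.mul_S_comul
      (fun m => Xm hH mM.act (cM.coact m)) (fun m => cM.coact ∘ₗ mM.act m)
      (fun m h => by rw [cs, Xm_str]) H2
end

section
/- Let (H, α) be a monoidal Hom-Hopf algebra with bijective antipode S. Let H^op⊗H denote the k-module H⊗H with multiplication (h⊗k)(l⊗m) = hl ⊗ mk, unit 1_H⊗1_H, comultiplication (h⊗k) ↦ (h₁⊗k₁)⊗(h₂⊗k₂), counit (h⊗k) ↦ ε(h)ε(k), and invertible map α⊗α. Then: (a) H^op⊗H is a monoidal Hom-bialgebra (i.e. a monoidal Hom-algebra, a monoidal Hom-coalgebra, and its comultiplication and counit are multiplicative and unital); (b) H, with invertible map α and coaction ρ : H → H⊗(H^op⊗H) given by ρ(h) = α((h₂)₁) ⊗ ((h₂)₂ ⊗ S(α⁻¹(h₁))), is a right (H^op⊗H)-Hom-comodule; and (c) ρ(hg) = ρ(h)ρ(g) for the componentwise product on H⊗(H^op⊗H) and ρ(1_H) = 1_H⊗(1_H⊗1_H), so that H is a right H^op⊗H-Hom-comodule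 algebra. -/
open TensorProduct

open DoiHomHopf

/-- The multiplication of `H^op ⊗ H`: `(h ⊗ k)(l ⊗ m) = hl ⊗ mk`. -/
noncomputable def opMul {k : Type*} [CommRing k] {H : Type*} [AddCommGroup H] [Module k H]
    (hH : HomHopf k H) : (H ⊗[k] H) →ₗ[k] (H ⊗[k] H) →ₗ[k] (H ⊗[k] H) :=
  TensorProduct.map₂ hH.mul hH.mul.flip

/-- The comultiplication of `H^op ⊗ H`: `(h ⊗ k) ↦ (h₁ ⊗ k₁) ⊗ (h₂ ⊗ k₂)`. -/
noncomputable def opComul {k : Type*} [CommRing k] {H : Type*} [AddCommGroup H] [Module k H]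
    (hH : HomHopf k H) : (H ⊗[k] H) →ₗ[k] (H ⊗[k] H) ⊗[k] (H ⊗[k] H) :=
  (TensorProduct.tensorTensorTensorComm k H H H H).toLinearMap ∘ₗ
    TensorProduct.map hH.comul hH.comul

/-- The counit of `H^op ⊗ H`: `(h ⊗ k) ↦ ε(h)ε(k)`. -/
noncomputable def opCounit {k : Type*} [CommRing k] {H : Type*} [AddCommGroup H] [Module k H]
    (hH : HomHopf k H) : (H ⊗[k] H) →ₗ[k] k :=
  (TensorProduct.lid k k).toLinearMap ∘ₗ TensorProduct.map hH.counit hH.counit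

/-- The coaction of `H^op ⊗ H` on `H`: `h ↦ α((h₂)₁) ⊗ ((h₂)₂ ⊗ S(α⁻¹(h₁)))`. -/
noncomputable def opCoact {k : Type*} [CommRing k] {H : Type*} [AddCommGroup H] [Module k H]
    (hH : HomHopf k H) : H →ₗ[k] H ⊗[k] (H ⊗[k] H) :=
  TensorProduct.map hH.str.toLinearMap LinearMap.id ∘ₗ
    (TensorProduct.assoc k H H H).toLinearMap ∘ₗ
    (TensorProduct.comm k H (H ⊗[k] H)).toLinearMap ∘ₗ
    TensorProduct.map (hH.S ∘ₗ hH.str.symm.toLinearMap) hH.comul ∘ₗ hH.comul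

/-- The action of `H^op ⊗ H` on `H`: `c ◁ (h ⊗ k) = α(k)(α⁻¹(c)h)`. -/
noncomputable def opAct {k : Type*} [CommRing k] {H : Type*} [AddCommGroup H] [Module k H]
    (hH : HomHopf k H) : H →ₗ[k] (H ⊗[k] H) →ₗ[k] H :=
  TensorProduct.curry (TensorProduct.lift hH.mul.flip ∘ₗ
    TensorProduct.map (TensorProduct.lift (hH.mul ∘ₗ hH.str.symm.toLinearMap))
      hH.str.toLinearMap ∘ₗ
    (TensorProduct.assoc k H H H).symm.toLinearMap)

open TensorProduct

namespace PlainHopf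
open Coalgebra HopfAlgebra WithConv
variable {R A : Type*} [CommRing R] [Ring A] [HopfAlgebra R A]

theorem four (h : A) : TensorProduct.map (comul (R := R)) (comul (R := R)) (comul (R := R) h) =
    (TensorProduct.assoc R A A (A ⊗[R] A)).symm
      (TensorProduct.map LinearMap.id (TensorProduct.assoc R A A A).toLinearMap
        (TensorProduct.map LinearMap.id (TensorProduct.map (comul (R := R)) LinearMap.id)
          (TensorProduct.map LinearMap.id (comul (R := R)) (comul (R := R) h)))) := by
  have : TensorProduct.map (comul (R := R)) (comul (R := R)) ∘ₗ (comul (R := R) (A := A)) =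
    (TensorProduct.assoc R A A (A ⊗[R] A)).symm.toLinearMap ∘ₗ
      (TensorProduct.map LinearMap.id (TensorProduct.assoc R A A A).toLinearMap ∘ₗ
        (TensorProduct.map LinearMap.id (TensorProduct.map (comul (R := R)) LinearMap.id) ∘ₗ
          (TensorProduct.map LinearMap.id (comul (R := R)) ∘ₗ (comul (R := R) (A := A))))) := by
    simp only [coassoc_simps]
  exact congr($this h)

noncomputable def T : A →ₗ[R] A ⊗[R] (A ⊗[R] A) :=
  TensorProduct.map LinearMap.id (comul (R := R)) ∘ₗ (comul (R := R))

noncomputable def E5 : A ⊗[R] ((A ⊗[R] (A ⊗[R] A)) ⊗[R] A) →ₗ[R]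
   (A ⊗[R] A) ⊗[R] (A ⊗[R] (A ⊗[R] A)) :=
  (TensorProduct.assoc R A A (A ⊗[R] (A ⊗[R] A))).symm.toLinearMap ∘ₗ
   TensorProduct.map LinearMap.id
    (TensorProduct.map LinearMap.id (TensorProduct.assoc R A A A).toLinearMap ∘ₗ
      (TensorProduct.assoc R A (A ⊗[R] A) A).toLinearMap)

theorem five : TensorProduct.map (comul (R := R)) (TensorProduct.map LinearMap.id (comul (R := R))) ∘ₗ (T (R := R) (A := A))
   = E5 ∘ₗ TensorProduct.map LinearMap.id (TensorProduct.map T LinearMap.id) ∘ₗ (T (R := R) (A := A)) := by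
  simp only [coassoc_simps, T, E5]

theorem G_left_inv : toConv (TensorProduct.map (antipode R) (antipode R) ∘ₗ
      (TensorProduct.comm R A A).toLinearMap ∘ₗ comul (R := R) (A := A)) * toConv (comul (R := R) (A := A)) = 1 := by
  ext h
  let m := LinearMap.mul' R A
  let Φ : A ⊗[R] ((A ⊗[R] A) ⊗[R] A) →ₗ[R] A ⊗[R] A :=
    TensorProduct.map LinearMap.id m ∘ₗ TensorProduct.map LinearMap.id (TensorProduct.map (antipode R) LinearMap.id) ∘ₗ
    (TensorProduct.leftComm R A A A).toLinearMap ∘ₗ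
    TensorProduct.map LinearMap.id (TensorProduct.map (m ∘ₗ TensorProduct.map (antipode R) LinearMap.id) LinearMap.id)
  let Ψ : (A ⊗[R] A) ⊗[R] (A ⊗[R] A) →ₗ[R] A ⊗[R] A :=
    LinearMap.mul' R (A ⊗[R] A) ∘ₗ TensorProduct.map (TensorProduct.map (antipode R) (antipode R) ∘ₗ
      (TensorProduct.comm R A A).toLinearMap) LinearMap.id
  have key : Ψ ∘ₗ (TensorProduct.assoc R A A (A ⊗[R] A)).symm.toLinearMap ∘ₗ
      (TensorProduct.map LinearMap.id (TensorProduct.assoc R A A A).toLinearMap) = Φ := by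
    ext a b c d
    simp [Φ, Ψ, m]
  have h1 := congr(Ψ $(four (R := R) h))
  have h2 := fun x => congr($key x)
  simp only [LinearMap.comp_apply, LinearEquiv.coe_coe] at h2
  rw [h2] at h1
  have lhs : Ψ (TensorProduct.map (comul (R := R)) (comul (R := R)) (comul (R := R) h)) =
     (toConv (TensorProduct.map (antipode R) (antipode R) ∘ₗ
      (TensorProduct.comm R A A).toLinearMap ∘ₗ comul (R := R) (A := A)) * toConv (comul (R := R) (A := A))) h := by
    simp only [LinearMap.convMul_apply, Ψ, LinearMap.comp_apply]
    congr 1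
    induction comul (R := R) h using TensorProduct.induction_on with
    | zero => simp
    | tmul x y => simp
    | add x y hx hy => simp only [map_add, hx, hy]
  rw [← lhs, h1]
  have e : ∀ y : A ⊗[R] A, Φ (TensorProduct.map LinearMap.id (TensorProduct.map (comul (R := R)) LinearMap.id) (TensorProduct.map LinearMap.id (comul (R := R)) y))
     = 1 ⊗ₜ m (TensorProduct.map (antipode R) LinearMap.id y) := by
    intro y
    induction y using TensorProduct.induction_on with
    | zero => simp
    | add x y hx hy => simp only [map_add, hx, hy, tmul_add]
    | tmul a b =>
      have q : b = (TensorProduct.lid R A) (LinearMap.rTensor A (counit (R := R)) (comul (R := R) b)) := by simp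
      conv_rhs => rw [q]
      simp only [map_tmul, LinearMap.id_apply]
      generalize comul (R := R) b = z
      induction z using TensorProduct.induction_on with
      | zero => simp
      | add x y hx hy => simp only [map_add, hx, hy, tmul_add]
      | tmul x y =>
        have := mul_antipode_rTensor_comul_apply (R := R) x
        simp only [LinearMap.rTensor] at this
        simp [Φ, m, this, Algebra.algebraMap_eq_smul_one, smul_tmul']
  rw [e]
  have := mul_antipode_rTensor_comul_apply (R := R) h
  simp only [LinearMap.rTensor] at this
  simp only [m, this]
  simp [Algebra.TensorProduct.one_def, Algebra.algebraMap_eq_smul_one]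

theorem comul_antipode (h : A) : comul (R := R) (antipode R h) =
    TensorProduct.map (antipode R) (antipode R) (TensorProduct.comm R A A (comul (R := R) h)) := by
  have := left_inv_eq_right_inv (G_left_inv (R := R) (A := A)) LinearMap.comul_right_inv
  exact congr($(this.symm) h)

noncomputable def P : A ⊗[R] (A ⊗[R] A) →ₗ[R] A ⊗[R] (A ⊗[R] A) :=
  (TensorProduct.assoc R A A A).toLinearMap ∘ₗ (TensorProduct.comm R A (A ⊗[R] A)).toLinearMap ∘ₗ
    TensorProduct.map (antipode R) LinearMap.id

@[simp] theorem P_tmul (a b c : A) : P (R := R) (a ⊗ₜ (b ⊗ₜ c)) = b ⊗ₜ (c ⊗ₜ antipode R a) := by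
  simp [P]

noncomputable def rho : A →ₗ[R] A ⊗[R] (A ⊗[R] A) := P ∘ₗ T

noncomputable def D2 : A ⊗[R] A →ₗ[R] (A ⊗[R] A) ⊗[R] (A ⊗[R] A) :=
  (TensorProduct.tensorTensorTensorComm R A A A A).toLinearMap ∘ₗ
    TensorProduct.map (comul (R := R)) (comul (R := R))

theorem rho_coassoc (h : A) : TensorProduct.assoc R A (A ⊗[R] A) (A ⊗[R] A)
    (TensorProduct.map (rho (R := R)) LinearMap.id (rho (R := R) h)) =
      TensorProduct.map LinearMap.id D2 (rho (R := R) h) := by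
  let Ψ : (A ⊗[R] A) ⊗[R] (A ⊗[R] (A ⊗[R] A)) →ₗ[R] A ⊗[R] ((A ⊗[R] A) ⊗[R] (A ⊗[R] A)) :=
    TensorProduct.map LinearMap.id ((TensorProduct.tensorTensorTensorComm R A A A A).toLinearMap) ∘ₗ
    (TensorProduct.assoc R A (A ⊗[R] A) (A ⊗[R] A)).toLinearMap ∘ₗ (TensorProduct.comm R (A ⊗[R] A) (A ⊗[R] (A ⊗[R] A))).toLinearMap ∘ₗ
    TensorProduct.map (TensorProduct.map (antipode R) (antipode R) ∘ₗ (TensorProduct.comm R A A).toLinearMap) LinearMap.id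
  have hr : ∀ t : A ⊗[R] (A ⊗[R] A), TensorProduct.map LinearMap.id D2 (P (R := R) t) =
     Ψ (TensorProduct.map (comul (R := R)) (TensorProduct.map LinearMap.id (comul (R := R))) t) := by
    intro t
    have : TensorProduct.map LinearMap.id D2 ∘ₗ (P (R := R) (A := A)) = Ψ ∘ₗ (TensorProduct.map (comul (R := R)) (TensorProduct.map LinearMap.id (comul (R := R)))) := by
      ext a b c
      simp [D2, comul_antipode, Ψ]
    exact congr($this t)
  have hl : ∀ t : A ⊗[R] (A ⊗[R] A), TensorProduct.assoc R A (A ⊗[R] A) (A ⊗[R] A)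
    (TensorProduct.map (rho (R := R)) LinearMap.id (P (R := R) t)) =
     Ψ (E5 (TensorProduct.map LinearMap.id (TensorProduct.map T LinearMap.id) t)) := by
    intro t
    have : (TensorProduct.assoc R A (A ⊗[R] A) (A ⊗[R] A)).toLinearMap ∘ₗ
      (TensorProduct.map (rho (R := R)) LinearMap.id) ∘ₗ (P (R := R) (A := A)) =
     Ψ ∘ₗ E5 ∘ₗ (TensorProduct.map LinearMap.id (TensorProduct.map T LinearMap.id)) := by
      ext a b c
      simp only [rho, AlgebraTensorModule.curry_apply, LinearMap.restrictScalars_self, curry_apply, LinearMap.comp_apply, P_tmul, map_tmul, LinearMap.id_apply, LinearEquiv.coe_coe]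
      generalize T (R := R) b = z
      induction z using TensorProduct.induction_on with
      | zero => simp
      | add x y hx hy => simp only [map_add, add_tmul, tmul_add, hx, hy]
      | tmul x y =>
        induction y using TensorProduct.induction_on with
        | zero => simp
        | add x y hx hy => simp only [map_add, add_tmul, tmul_add, hx, hy]
        | tmul y z => simp [Ψ, E5]
    exact congr($this t)
  have h5 := congr(Ψ ($(five (R := R) (A := A)) h))
  simp only [rho, LinearMap.comp_apply] at h5 hl hr ⊢
  rw [hl, hr, h5]

theorem rho_counit (h : A) : TensorProduct.rid R A (TensorProduct.map LinearMap.id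
    ((TensorProduct.lid R R).toLinearMap ∘ₗ TensorProduct.map (counit (R := R)) (counit (R := R))) (rho (R := R) h)) = h := by
  have e : ∀ y : A ⊗[R] A, TensorProduct.rid R A (TensorProduct.map LinearMap.id
    ((TensorProduct.lid R R).toLinearMap ∘ₗ TensorProduct.map (counit (R := R)) (counit (R := R))) (P (R := R) (TensorProduct.map LinearMap.id (comul (R := R)) y)))
    = TensorProduct.lid R A (LinearMap.rTensor A (counit (R := R)) y) := by
    intro y
    induction y using TensorProduct.induction_on with
    | zero => simp
    | add x y hx hy => simp only [map_add, hx, hy]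
    | tmul a b =>
      have q : b = (TensorProduct.rid R A) (LinearMap.lTensor A (counit (R := R)) (comul (R := R) b)) := by simp
      conv_rhs => rw [q]
      simp only [map_tmul, LinearMap.id_apply]
      generalize comul (R := R) b = z
      induction z using TensorProduct.induction_on with
      | zero => simp
      | add x y hx hy => simp only [map_add, hx, hy, tmul_add]
      | tmul x y => simp [smul_smul, mul_comm]
  simp only [rho, T, LinearMap.comp_apply] at e ⊢
  rw [e]; simp

theorem rho_mul (h g : A) : rho (R := R) (h * g) = TensorProduct.map₂ (LinearMap.mul R A)
    (TensorProduct.map₂ (LinearMap.mul R A) (LinearMap.mul R A).flip) (rho (R := R) h) (rho (R := R) g) := by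
  have e : ∀ x y : A ⊗[R] A, T (R := R) (h * g) = T (R := R) h * T (R := R) g := by
    intro x y
    have : ∀ z w : A ⊗[R] A, TensorProduct.map LinearMap.id (comul (R := R)) (z * w) = TensorProduct.map LinearMap.id (comul (R := R)) z * TensorProduct.map LinearMap.id (comul (R := R)) w := by
      intro z w
      induction z using TensorProduct.induction_on with
      | zero => simp
      | add x y hx hy => simp only [map_add, hx, hy, add_mul]
      | tmul x y =>
      induction w using TensorProduct.induction_on with
      | zero => simp
      | add x y hx hy => simp only [map_add, hx, hy, mul_add]
      | tmul a b => simp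
    simp [T, this]
  simp only [rho, LinearMap.comp_apply, e 0 0]
  generalize T (R := R) h = x
  generalize T (R := R) g = y
  have : (LinearMap.mul R (A ⊗[R] (A ⊗[R] A))).compr₂ P = (TensorProduct.map₂ (LinearMap.mul R A)
    (TensorProduct.map₂ (LinearMap.mul R A) (LinearMap.mul R A).flip)).compl₁₂ P P := by
    ext a b c d e f
    simp [antipode_mul_antidistrib]
  exact congr($this x y)

theorem rho_one : rho (R := R) (1 : A) = 1 ⊗ₜ (1 ⊗ₜ 1) := by
  simp [rho, T, Algebra.TensorProduct.one_def]

end PlainHopf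

namespace Untwist
variable {k : Type*} [CommRing k] {H : Type*} [AddCommGroup H] [Module k H] (hH : HomHopf k H)

theorem symm_mul (a b : H) : hH.str.symm (hH.mul a b) = hH.mul (hH.str.symm a) (hH.str.symm b) := by
  rw [LinearEquiv.symm_apply_eq, hH.str_mul]; simp

theorem symm_one : hH.str.symm hH.one = hH.one := by
  rw [LinearEquiv.symm_apply_eq, hH.str_one]

theorem S_symm (a : H) : hH.S (hH.str.symm a) = hH.str.symm (hH.S a) := by
  rw [LinearEquiv.eq_symm_apply, ← hH.S_str]; simp

theorem counit_symm (a : H) : hH.counit (hH.str.symm a) = hH.counit a := by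
  rw [← hH.counit_str]; simp

@[reducible] def ringOf : Ring H :=
  { ‹AddCommGroup H› with
    mul := fun a b => hH.str.symm (hH.mul a b)
    one := hH.one
    left_distrib := fun a b c => by
      change hH.str.symm (hH.mul a (b + c)) = hH.str.symm (hH.mul a b) + hH.str.symm (hH.mul a c)
      simp
    right_distrib := fun a b c => by
      change hH.str.symm (hH.mul (a + b) c) = hH.str.symm (hH.mul a c) + hH.str.symm (hH.mul b c)
      simp
    zero_mul := fun a => by
      change hH.str.symm (hH.mul 0 a) = 0
      simp
    mul_zero := fun a => by
      change hH.str.symm (hH.mul a 0) = 0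
      simp
    mul_assoc := fun a b c => by
      change hH.str.symm (hH.mul (hH.str.symm (hH.mul a b)) c) =
        hH.str.symm (hH.mul a (hH.str.symm (hH.mul b c)))
      have := hH.hom_assoc (hH.str.symm a) (hH.str.symm b) (hH.str.symm c)
      simp only [LinearEquiv.apply_symm_apply] at this
      rw [symm_mul hH b c, this, symm_mul hH a b]
    one_mul := fun a => by
      change hH.str.symm (hH.mul hH.one a) = a
      simp [hH.one_mul]
    mul_one := fun a => by
      change hH.str.symm (hH.mul a hH.one) = a
      simp [hH.mul_one] }

@[reducible] def algOf : letI := ringOf hH; Algebra k H :=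
  letI := ringOf hH
  Algebra.ofModule
    (fun r a b => by
      change hH.str.symm (hH.mul (r • a) b) = r • hH.str.symm (hH.mul a b)
      simp)
    (fun r a b => by
      change hH.str.symm (hH.mul a (r • b)) = r • hH.str.symm (hH.mul a b)
      simp)

noncomputable def cm : H →ₗ[k] H ⊗[k] H :=
  TensorProduct.map hH.str.toLinearMap hH.str.toLinearMap ∘ₗ hH.comul

theorem cm_eq (h : H) : hH.comul h =
    TensorProduct.map hH.str.symm.toLinearMap hH.str.symm.toLinearMap (cm hH h) := by
  simp [cm, TensorProduct.map_map]

theorem cm_str (h : H) : cm hH (hH.str h) =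
    TensorProduct.map hH.str.toLinearMap hH.str.toLinearMap (cm hH h) := by
  simp [cm, hH.comul_str]

theorem cm_symm (h : H) : cm hH (hH.str.symm h) =
    TensorProduct.map hH.str.symm.toLinearMap hH.str.symm.toLinearMap (cm hH h) := by
  have := cm_str hH (hH.str.symm h)
  rw [LinearEquiv.apply_symm_apply] at this
  rw [this]; simp [TensorProduct.map_map]

@[reducible] noncomputable def coalgOf : Coalgebra k H where
  comul := cm hH
  counit := hH.counit
  coassoc := by
    ext h
    have e1 : ∀ y : H ⊗[k] H, TensorProduct.assoc k H H H (TensorProduct.map (cm hH) LinearMap.id (TensorProduct.map hH.str.toLinearMap hH.str.toLinearMap y))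
       = TensorProduct.map (hH.str.toLinearMap ∘ₗ hH.str.toLinearMap) (TensorProduct.map (hH.str.toLinearMap ∘ₗ hH.str.toLinearMap)  (hH.str.toLinearMap ∘ₗ hH.str.toLinearMap)) (TensorProduct.assoc k H H H (TensorProduct.map hH.comul hH.str.symm.toLinearMap y)) := by
      intro y
      induction y using TensorProduct.induction_on with
      | zero => simp
      | add x y hx hy => simp only [map_add, hx, hy]
      | tmul a b =>
        simp only [map_tmul, LinearEquiv.coe_coe, cm, LinearMap.comp_apply, hH.comul_str, LinearMap.id_apply]
        generalize hH.comul a = z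
        induction z using TensorProduct.induction_on with
        | zero => simp
        | add x y hx hy => simp only [map_add, hx, hy, add_tmul]
        | tmul a b => simp
    have e2 : ∀ y : H ⊗[k] H, (TensorProduct.map LinearMap.id (cm hH) (TensorProduct.map hH.str.toLinearMap hH.str.toLinearMap y))
       = TensorProduct.map (hH.str.toLinearMap ∘ₗ hH.str.toLinearMap) (TensorProduct.map (hH.str.toLinearMap ∘ₗ hH.str.toLinearMap)  (hH.str.toLinearMap ∘ₗ hH.str.toLinearMap)) (TensorProduct.map hH.str.symm.toLinearMap hH.comul y) := by
      intro y
      induction y using TensorProduct.induction_on with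
      | zero => simp
      | add x y hx hy => simp only [map_add, hx, hy]
      | tmul a b =>
        simp [cm, hH.comul_str, TensorProduct.map_map]
    have := hH.hom_coassoc h
    change TensorProduct.assoc k H H H (TensorProduct.map (cm hH) LinearMap.id (TensorProduct.map hH.str.toLinearMap hH.str.toLinearMap (hH.comul h))) = (TensorProduct.map LinearMap.id (cm hH) (TensorProduct.map hH.str.toLinearMap hH.str.toLinearMap (hH.comul h)))
    rw [e1, e2, this]
  rTensor_counit_comp_comul := by
    ext h
    apply (TensorProduct.lid k H).injective
    apply hH.str.symm.injective
    have e : ∀ y : H ⊗[k] H, hH.str.symm (TensorProduct.lid k H (TensorProduct.map hH.counit LinearMap.id (TensorProduct.map hH.str.toLinearMap hH.str.toLinearMap y))) = TensorProduct.lid k H (TensorProduct.map hH.counit LinearMap.id y) := by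
      intro y
      induction y using TensorProduct.induction_on with
      | zero => simp
      | add x y hx hy => simp only [map_add, hx, hy]
      | tmul a b => simp [hH.counit_str]
    have := hH.counit_comul_left h
    rw [← e] at this
    simpa [cm, LinearMap.rTensor] using this
  lTensor_counit_comp_comul := by
    ext h
    apply (TensorProduct.rid k H).injective
    apply hH.str.symm.injective
    have e : ∀ y : H ⊗[k] H, hH.str.symm (TensorProduct.rid k H (TensorProduct.map LinearMap.id hH.counit (TensorProduct.map hH.str.toLinearMap hH.str.toLinearMap y))) = TensorProduct.rid k H (TensorProduct.map LinearMap.id hH.counit y) := by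
      intro y
      induction y using TensorProduct.induction_on with
      | zero => simp
      | add x y hx hy => simp only [map_add, hx, hy]
      | tmul a b => simp [hH.counit_str]
    have := hH.counit_comul_right h
    rw [← e] at this
    simpa [cm, LinearMap.lTensor] using this

@[reducible] noncomputable def bialgOf : letI := ringOf hH; Bialgebra k H :=
  letI := ringOf hH
  letI := algOf hH
  letI := coalgOf hH
  Bialgebra.mk' k H hH.counit_one
    (fun {a b} => by
      change hH.counit (hH.str.symm (hH.mul a b)) = hH.counit a * hH.counit b
      rw [counit_symm, hH.counit_mul])
    (by
      change cm hH hH.one = hH.one ⊗ₜ hH.one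
      simp [cm, hH.comul_one, hH.str_one])
    (fun {a b} => by
      change cm hH (hH.str.symm (hH.mul a b)) = cm hH a * cm hH b
      rw [cm_symm]
      simp only [cm, LinearMap.comp_apply, hH.comul_mul]
      generalize hH.comul a = x
      generalize hH.comul b = y
      induction x using TensorProduct.induction_on with
      | zero => simp
      | add x y hx hy => simp only [map_add, LinearMap.add_apply, hx, hy, add_mul]
      | tmul a b =>
      induction y using TensorProduct.induction_on with
      | zero => simp
      | add x y hx hy => simp only [map_add, hx, hy, mul_add]
      | tmul c d =>
        simp only [map₂_apply_tmul, map_tmul, LinearEquiv.coe_coe, Algebra.TensorProduct.tmul_mul_tmul,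
          hH.str_mul]
        rfl)

@[reducible] noncomputable def hopfOf : letI := ringOf hH; HopfAlgebra k H :=
  letI := ringOf hH
  { bialgOf hH with
    antipode := hH.S
    mul_antipode_rTensor_comul := by
      ext h
      let := bialgOf hH
      have := congr(hH.str.symm (hH.str $(hH.S_mul_comul h)))
      have e : ∀ y : H ⊗[k] H, (LinearMap.mul' k H) (TensorProduct.map hH.S LinearMap.id (TensorProduct.map hH.str.toLinearMap hH.str.toLinearMap y)) = hH.str.symm (hH.str (TensorProduct.lift hH.mul (TensorProduct.map hH.S LinearMap.id y))) := by
        intro y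
        induction y using TensorProduct.induction_on with
        | zero => simp
        | add x y hx hy => simp only [map_add, hx, hy]
        | tmul a b =>
          simp only [map_tmul, LinearEquiv.coe_coe, LinearMap.mul'_apply, LinearMap.id_apply, lift.tmul, hH.S_str, hH.str_mul]
          rfl
      rw [← e] at this
      refine this.trans ?_
      simp only [map_smul, hH.str_one, symm_one]
      rfl
    mul_antipode_lTensor_comul := by
      ext h
      let := bialgOf hH
      have := congr(hH.str.symm (hH.str $(hH.mul_S_comul h)))
      have e : ∀ y : H ⊗[k] H, (LinearMap.mul' k H) (TensorProduct.map LinearMap.id hH.S (TensorProduct.map hH.str.toLinearMap hH.str.toLinearMap y)) = hH.str.symm (hH.str (TensorProduct.lift hH.mul (TensorProduct.map LinearMap.id hH.S y))) := by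
        intro y
        induction y using TensorProduct.induction_on with
        | zero => simp
        | add x y hx hy => simp only [map_add, hx, hy]
        | tmul a b =>
          simp only [map_tmul, LinearEquiv.coe_coe, LinearMap.mul'_apply, LinearMap.id_apply, lift.tmul, hH.S_str, hH.str_mul]
          rfl
      rw [← e] at this
      refine this.trans ?_
      simp only [map_smul, hH.str_one, symm_one]
      rfl }


noncomputable def rhoH : H →ₗ[k] H ⊗[k] (H ⊗[k] H) :=
  (TensorProduct.assoc k H H H).toLinearMap ∘ₗ (TensorProduct.comm k H (H ⊗[k] H)).toLinearMap ∘ₗ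
    TensorProduct.map hH.S LinearMap.id ∘ₗ TensorProduct.map LinearMap.id (cm hH) ∘ₗ cm hH

noncomputable def D2H : H ⊗[k] H →ₗ[k] (H ⊗[k] H) ⊗[k] (H ⊗[k] H) :=
  (TensorProduct.tensorTensorTensorComm k H H H H).toLinearMap ∘ₗ
    TensorProduct.map (cm hH) (cm hH)

theorem rhoH_coassoc (h : H) : TensorProduct.assoc k H (H ⊗[k] H) (H ⊗[k] H)
    (TensorProduct.map (rhoH hH) LinearMap.id (rhoH hH h)) =
      TensorProduct.map LinearMap.id (D2H hH) (rhoH hH h) := by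
  let := ringOf hH
  let := hopfOf hH
  exact PlainHopf.rho_coassoc (R := k) h

theorem rhoH_counit (h : H) : TensorProduct.rid k H
    (TensorProduct.map LinearMap.id (opCounit hH) (rhoH hH h)) = h := by
  let := ringOf hH
  let := hopfOf hH
  exact PlainHopf.rho_counit (R := k) h

theorem rhoH_mul (h g : H) : rhoH hH (hH.str.symm (hH.mul h g)) =
    TensorProduct.map₂ (hH.mul.compr₂ hH.str.symm.toLinearMap)
     (TensorProduct.map₂ (hH.mul.compr₂ hH.str.symm.toLinearMap)
       (hH.mul.compr₂ hH.str.symm.toLinearMap).flip) (rhoH hH h) (rhoH hH g) := by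
  let := ringOf hH
  let := hopfOf hH
  exact PlainHopf.rho_mul (R := k) h g

theorem rhoH_one : rhoH hH hH.one = hH.one ⊗ₜ (hH.one ⊗ₜ hH.one) := by
  let := ringOf hH
  let := hopfOf hH
  exact PlainHopf.rho_one (R := k) (A := H)

theorem rhoH_symm (h : H) : rhoH hH (hH.str.symm h) = TensorProduct.map hH.str.symm.toLinearMap
    (TensorProduct.map hH.str.symm.toLinearMap hH.str.symm.toLinearMap) (rhoH hH h) := by
  simp only [rhoH, LinearMap.comp_apply, LinearEquiv.coe_coe, cm_symm]
  induction cm hH h using TensorProduct.induction_on with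
  | zero => simp
  | add x y hx hy => simp only [map_add, hx, hy]
  | tmul a b =>
    simp only [map_tmul, LinearEquiv.coe_coe, LinearMap.id_apply, cm_symm]
    induction cm hH b using TensorProduct.induction_on with
    | zero => simp
    | add x y hx hy => simp only [map_add, tmul_add, hx, hy]
    | tmul b c => simp [S_symm]

theorem D2H_symm (h : H ⊗[k] H) : D2H hH (TensorProduct.map hH.str.symm.toLinearMap hH.str.symm.toLinearMap h) =
    TensorProduct.map (TensorProduct.map hH.str.symm.toLinearMap hH.str.symm.toLinearMap)
    (TensorProduct.map hH.str.symm.toLinearMap hH.str.symm.toLinearMap) (D2H hH h) := by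
  induction h using TensorProduct.induction_on with
  | zero => simp
  | add x y hx hy => simp only [map_add, hx, hy]
  | tmul a b =>
    simp only [D2H, LinearMap.comp_apply, LinearEquiv.coe_coe, map_tmul, cm_symm]
    generalize cm hH a = x
    generalize cm hH b = y
    induction x using TensorProduct.induction_on with
    | zero => simp
    | add x y hx hy => simp only [map_add, add_tmul, hx, hy]
    | tmul a b =>
    induction y using TensorProduct.induction_on with
    | zero => simp
    | add x y hx hy => simp only [map_add, tmul_add, hx, hy]
    | tmul c d => simp

theorem opComul_eq (h : H ⊗[k] H) : opComul hH h =
    TensorProduct.map (TensorProduct.map hH.str.symm.toLinearMap hH.str.symm.toLinearMap)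
    (TensorProduct.map hH.str.symm.toLinearMap hH.str.symm.toLinearMap) (D2H hH h) := by
  induction h using TensorProduct.induction_on with
  | zero => simp
  | add x y hx hy => simp only [map_add, hx, hy]
  | tmul a b =>
    simp only [opComul, D2H, LinearMap.comp_apply, LinearEquiv.coe_coe, map_tmul, cm_eq]
    generalize cm hH a = x
    generalize cm hH b = y
    induction x using TensorProduct.induction_on with
    | zero => simp
    | add x y hx hy => simp only [map_add, add_tmul, hx, hy]
    | tmul a b =>
    induction y using TensorProduct.induction_on with
    | zero => simp
    | add x y hx hy => simp only [map_add, tmul_add, hx, hy]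
    | tmul c d => simp

theorem opCoact_eq (h : H) : opCoact hH h = TensorProduct.map hH.str.symm.toLinearMap
    (TensorProduct.map (hH.str.symm.toLinearMap ∘ₗ hH.str.symm.toLinearMap)
      (hH.str.symm.toLinearMap ∘ₗ hH.str.symm.toLinearMap)) (rhoH hH h) := by
  simp only [opCoact, rhoH, LinearMap.comp_apply, LinearEquiv.coe_coe, cm_eq]
  induction cm hH h using TensorProduct.induction_on with
  | zero => simp
  | add x y hx hy => simp only [map_add, hx, hy]
  | tmul a b =>
    simp only [map_tmul, LinearEquiv.coe_coe, LinearMap.id_apply, cm_eq, cm_symm]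
    induction cm hH b using TensorProduct.induction_on with
    | zero => simp
    | add x y hx hy => simp only [map_add, tmul_add, hx, hy]
    | tmul b c => simp [S_symm]

theorem opCoact_coassoc (h : H) : TensorProduct.assoc k H (H ⊗[k] H) (H ⊗[k] H)
        (TensorProduct.map (opCoact hH) (TensorProduct.congr hH.str hH.str).symm.toLinearMap (opCoact hH h)) =
      TensorProduct.map hH.str.symm.toLinearMap (opComul hH) (opCoact hH h) := by
  let s := hH.str.symm.toLinearMap
  let s2 := TensorProduct.map s s
  have h1 := congr(TensorProduct.map (s ∘ₗ s) (TensorProduct.map (s2 ∘ₗ s2 ∘ₗ s2) (s2 ∘ₗ s2 ∘ₗ s2)) $(rhoH_coassoc hH h))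
  rw [opCoact_eq]
  have hl : ∀ z, TensorProduct.assoc k H (H ⊗[k] H) (H ⊗[k] H)
        (TensorProduct.map (opCoact hH) (TensorProduct.congr hH.str hH.str).symm.toLinearMap (TensorProduct.map s (TensorProduct.map (s ∘ₗ s) (s ∘ₗ s)) z)) = TensorProduct.map (s ∘ₗ s) (TensorProduct.map (s2 ∘ₗ s2 ∘ₗ s2) (s2 ∘ₗ s2 ∘ₗ s2)) (TensorProduct.assoc k H (H ⊗[k] H) (H ⊗[k] H)
    (TensorProduct.map (rhoH hH) LinearMap.id z)) := by
    intro z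
    induction z using TensorProduct.induction_on with
    | zero => simp
    | add x y hx hy => simp only [map_add, hx, hy]
    | tmul a b =>
      have e : (TensorProduct.congr hH.str hH.str).symm.toLinearMap (TensorProduct.map (s ∘ₗ s) (s ∘ₗ s) b) = (s2 ∘ₗ s2 ∘ₗ s2) b := by
        induction b using TensorProduct.induction_on with
        | zero => simp
        | add x y hx hy => simp only [map_add, hx, hy]
        | tmul a b => simp [s, s2]
      simp only [map_tmul, e, LinearMap.id_apply]
      have e2 : opCoact hH (s a) = TensorProduct.map (s ∘ₗ s) (s2 ∘ₗ s2 ∘ₗ s2) (rhoH hH a) := by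
        rw [opCoact_eq]
        simp only [s, s2, LinearEquiv.coe_coe, rhoH_symm, TensorProduct.map_map, ← TensorProduct.map_comp, LinearMap.comp_assoc]
      rw [e2]
      induction rhoH hH a using TensorProduct.induction_on with
      | zero => simp
      | add x y hx hy => simp only [map_add, add_tmul, hx, hy]
      | tmul x y => simp
  have hr : ∀ z, TensorProduct.map hH.str.symm.toLinearMap (opComul hH) (TensorProduct.map s (TensorProduct.map (s ∘ₗ s) (s ∘ₗ s)) z) = TensorProduct.map (s ∘ₗ s) (TensorProduct.map (s2 ∘ₗ s2 ∘ₗ s2) (s2 ∘ₗ s2 ∘ₗ s2)) (TensorProduct.map LinearMap.id (D2H hH) z) := by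
    intro z
    induction z using TensorProduct.induction_on with
    | zero => simp
    | add x y hx hy => simp only [map_add, hx, hy]
    | tmul a b =>
      simp only [map_tmul, LinearMap.id_apply, TensorProduct.map_comp, LinearMap.comp_apply, s, s2, opComul_eq, D2H_symm]
  rw [hl, hr, h1]

theorem opCoact_counit (h : H) : TensorProduct.rid k H (TensorProduct.map LinearMap.id (opCounit hH) (opCoact hH h)) = hH.str.symm h := by
  rw [opCoact_eq]
  conv_rhs => rw [← rhoH_counit hH h]
  induction rhoH hH h using TensorProduct.induction_on with
  | zero => simp
  | add x y hx hy => simp only [map_add, hx, hy]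
  | tmul a b =>
    induction b using TensorProduct.induction_on with
    | zero => simp
    | add x y hx hy => simp only [map_add, tmul_add, hx, hy]
    | tmul x y => simp [opCounit, counit_symm]

theorem opCoact_str (h : H) : opCoact hH (hH.str h) = TensorProduct.map hH.str.toLinearMap (TensorProduct.congr hH.str hH.str).toLinearMap (opCoact hH h) := by
  obtain ⟨g, rfl⟩ := hH.str.symm.surjective h
  rw [opCoact_eq, opCoact_eq, rhoH_symm]
  simp only [LinearEquiv.apply_symm_apply]
  induction rhoH hH g using TensorProduct.induction_on with
  | zero => simp
  | add x y hx hy => simp only [map_add, hx, hy]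
  | tmul a b =>
    induction b using TensorProduct.induction_on with
    | zero => simp
    | add x y hx hy => simp only [map_add, tmul_add, hx, hy]
    | tmul x y => simp

theorem opCoact_one : opCoact hH hH.one = hH.one ⊗ₜ (hH.one ⊗ₜ hH.one) := by
  rw [opCoact_eq, rhoH_one]; simp [symm_one]

theorem opCoact_mul (h g : H) : opCoact hH (hH.mul h g) =
    TensorProduct.map₂ hH.mul (opMul hH) (opCoact hH h) (opCoact hH g) := by
  have h1 := opCoact_str hH (hH.str.symm (hH.mul h g))
  rw [LinearEquiv.apply_symm_apply] at h1
  rw [h1, opCoact_eq, opCoact_eq, opCoact_eq, rhoH_mul]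
  generalize rhoH hH h = x
  generalize rhoH hH g = y
  induction x using TensorProduct.induction_on with
  | zero => simp
  | add x y hx hy => simp only [map_add, LinearMap.add_apply, hx, hy]
  | tmul a x =>
  induction y using TensorProduct.induction_on with
  | zero => simp
  | add x y hx hy => simp only [map_add, hx, hy]
  | tmul b y =>
  induction x using TensorProduct.induction_on with
  | zero => simp
  | add x y hx hy => simp only [map_add, tmul_add, LinearMap.add_apply, hx, hy]
  | tmul x x' =>
  induction y using TensorProduct.induction_on with
  | zero => simp
  | add x y hx hy => simp only [map_add, tmul_add, hx, hy]
  | tmul y y' => simp [opMul, symm_mul, hH.str_mul]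

noncomputable def opB : HomBialg k (H ⊗[k] H) where
  str := TensorProduct.congr hH.str hH.str
  mul := opMul hH
  one := hH.one ⊗ₜ hH.one
  comul := opComul hH
  counit := opCounit hH
  str_mul := by
    intro a b
    induction a using TensorProduct.induction_on with
    | zero => simp
    | add x y hx hy => simp only [map_add, LinearMap.add_apply, hx, hy]
    | tmul a a' =>
    induction b using TensorProduct.induction_on with
    | zero => simp
    | add x y hx hy => simp only [map_add, hx, hy]
    | tmul b b' => simp [opMul, hH.str_mul]
  str_one := by simp [hH.str_one]
  hom_assoc := by
    intro a b c
    induction a using TensorProduct.induction_on with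
    | zero => simp
    | add x y hx hy => simp only [map_add, LinearMap.add_apply, hx, hy]
    | tmul a a' =>
    induction b using TensorProduct.induction_on with
    | zero => simp
    | add x y hx hy => simp only [map_add, LinearMap.add_apply, hx, hy]
    | tmul b b' =>
    induction c using TensorProduct.induction_on with
    | zero => simp
    | add x y hx hy => simp only [map_add, hx, hy]
    | tmul c c' => simp [opMul, hH.hom_assoc]
  mul_one := by
    intro a
    induction a using TensorProduct.induction_on with
    | zero => simp
    | add x y hx hy => simp only [map_add, LinearMap.add_apply, hx, hy]
    | tmul a a' => simp [opMul, hH.mul_one, hH.one_mul]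
  one_mul := by
    intro a
    induction a using TensorProduct.induction_on with
    | zero => simp
    | add x y hx hy => simp only [map_add, hx, hy]
    | tmul a a' => simp [opMul, hH.mul_one, hH.one_mul]
  comul_str := by
    intro a
    induction a using TensorProduct.induction_on with
    | zero => simp
    | add x y hx hy => simp only [map_add, hx, hy]
    | tmul a b =>
      simp only [opComul, LinearMap.comp_apply, LinearEquiv.coe_coe, map_tmul, congr_tmul, hH.comul_str]
      generalize hH.comul a = x
      generalize hH.comul b = y
      induction x using TensorProduct.induction_on with
      | zero => simp
      | add x y hx hy => simp only [map_add, add_tmul, hx, hy]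
      | tmul a b =>
      induction y using TensorProduct.induction_on with
      | zero => simp
      | add x y hx hy => simp only [map_add, tmul_add, hx, hy]
      | tmul c d => simp
  counit_str := by
    intro a
    induction a using TensorProduct.induction_on with
    | zero => simp
    | add x y hx hy => simp only [map_add, hx, hy]
    | tmul a b => simp [opCounit, hH.counit_str]
  hom_coassoc := by
    intro a
    induction a using TensorProduct.induction_on with
    | zero => simp
    | add x y hx hy => simp only [map_add, hx, hy]
    | tmul a b =>
      let F : (H ⊗[k] (H ⊗[k] H)) ⊗[k] (H ⊗[k] (H ⊗[k] H)) →ₗ[k] (H ⊗[k] H) ⊗[k] ((H ⊗[k] H) ⊗[k] (H ⊗[k] H)) :=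
        TensorProduct.map LinearMap.id (TensorProduct.tensorTensorTensorComm k H H H H).toLinearMap ∘ₗ
          (TensorProduct.tensorTensorTensorComm k H (H ⊗[k] H) H (H ⊗[k] H)).toLinearMap
      have hl : ∀ x y : H ⊗[k] H, TensorProduct.map (TensorProduct.congr hH.str hH.str).symm.toLinearMap (opComul hH)
          (TensorProduct.tensorTensorTensorComm k H H H H (x ⊗ₜ y)) = F (TensorProduct.map hH.str.symm.toLinearMap hH.comul x ⊗ₜ TensorProduct.map hH.str.symm.toLinearMap hH.comul y) := by
        intro x y
        induction x using TensorProduct.induction_on with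
        | zero => simp
        | add x y hx hy => simp only [map_add, add_tmul, hx, hy]
        | tmul a b =>
        induction y using TensorProduct.induction_on with
        | zero => simp
        | add x y hx hy => simp only [map_add, tmul_add, hx, hy]
        | tmul c d => simp [F, opComul]
      have hr : ∀ x y : H ⊗[k] H, TensorProduct.assoc k (H ⊗[k] H) (H ⊗[k] H) (H ⊗[k] H) (TensorProduct.map (opComul hH) (TensorProduct.congr hH.str hH.str).symm.toLinearMap
          (TensorProduct.tensorTensorTensorComm k H H H H (x ⊗ₜ y))) = F (TensorProduct.assoc k H H H (TensorProduct.map hH.comul hH.str.symm.toLinearMap x) ⊗ₜ TensorProduct.assoc k H H H (TensorProduct.map hH.comul hH.str.symm.toLinearMap y)) := by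
        intro x y
        induction x using TensorProduct.induction_on with
        | zero => simp
        | add x y hx hy => simp only [map_add, add_tmul, hx, hy]
        | tmul a b =>
        induction y using TensorProduct.induction_on with
        | zero => simp
        | add x y hx hy => simp only [map_add, tmul_add, hx, hy]
        | tmul c d =>
          simp only [tensorTensorTensorComm_tmul, opComul, map_tmul, LinearMap.comp_apply, LinearEquiv.coe_coe]
          generalize hH.comul a = x
          generalize hH.comul c = y
          induction x using TensorProduct.induction_on with
          | zero => simp
          | add x y hx hy => simp only [map_add, add_tmul, hx, hy]
          | tmul a b =>
          induction y using TensorProduct.induction_on with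
          | zero => simp
          | add x y hx hy => simp only [map_add, tmul_add, add_tmul, hx, hy]
          | tmul c d => simp [F]
      have e : opComul hH (a ⊗ₜ b) = TensorProduct.tensorTensorTensorComm k H H H H (hH.comul a ⊗ₜ hH.comul b) := rfl
      rw [e, hl, hr, hH.hom_coassoc, hH.hom_coassoc]
  counit_comul_left := by
    intro a
    induction a using TensorProduct.induction_on with
    | zero => simp
    | add x y hx hy => simp only [map_add, hx, hy]
    | tmul a b =>
      rw [TensorProduct.congr_symm_tmul, ← hH.counit_comul_left, ← hH.counit_comul_left]
      simp only [opComul, LinearMap.comp_apply, LinearEquiv.coe_coe, map_tmul]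
      generalize hH.comul a = x
      generalize hH.comul b = y
      induction x using TensorProduct.induction_on with
      | zero => simp
      | add x y hx hy => simp only [map_add, add_tmul, hx, hy]
      | tmul a b =>
      induction y using TensorProduct.induction_on with
      | zero => simp
      | add x y hx hy => simp only [map_add, tmul_add, hx, hy]
      | tmul c d => simp [opCounit, smul_tmul', smul_smul, mul_comm]
  counit_comul_right := by
    intro a
    induction a using TensorProduct.induction_on with
    | zero => simp
    | add x y hx hy => simp only [map_add, hx, hy]
    | tmul a b =>
      rw [TensorProduct.congr_symm_tmul, ← hH.counit_comul_right, ← hH.counit_comul_right]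
      simp only [opComul, LinearMap.comp_apply, LinearEquiv.coe_coe, map_tmul]
      generalize hH.comul a = x
      generalize hH.comul b = y
      induction x using TensorProduct.induction_on with
      | zero => simp
      | add x y hx hy => simp only [map_add, add_tmul, hx, hy]
      | tmul a b =>
      induction y using TensorProduct.induction_on with
      | zero => simp
      | add x y hx hy => simp only [map_add, tmul_add, hx, hy]
      | tmul c d => simp [opCounit, smul_tmul', smul_smul, mul_comm]
  comul_mul := by
    intro a b
    induction a using TensorProduct.induction_on with
    | zero => simp
    | add x y hx hy => simp only [map_add, LinearMap.add_apply, hx, hy]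
    | tmul a a' =>
    induction b using TensorProduct.induction_on with
    | zero => simp
    | add x y hx hy => simp only [map_add, hx, hy]
    | tmul b b' =>
      simp only [opComul, opMul, LinearMap.comp_apply, LinearEquiv.coe_coe, map_tmul, map₂_apply_tmul, LinearMap.flip_apply, hH.comul_mul]
      generalize hH.comul a = x
      generalize hH.comul b = y
      generalize hH.comul a' = x'
      generalize hH.comul b' = y'
      induction x using TensorProduct.induction_on with
      | zero => simp
      | add x y hx hy => simp only [map_add, add_tmul, LinearMap.add_apply, hx, hy]
      | tmul a b =>
      induction y using TensorProduct.induction_on with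
      | zero => simp
      | add x y hx hy => simp only [map_add, add_tmul, hx, hy]
      | tmul c d =>
      induction x' using TensorProduct.induction_on with
      | zero => simp
      | add x y hx hy => simp only [map_add, tmul_add, LinearMap.add_apply, hx, hy]
      | tmul a' b' =>
      induction y' using TensorProduct.induction_on with
      | zero => simp
      | add x y hx hy => simp only [map_add, tmul_add, LinearMap.add_apply, hx, hy]
      | tmul c' d' => simp
  comul_one := by simp [opComul, hH.comul_one]
  counit_mul := by
    intro a b
    induction a using TensorProduct.induction_on with
    | zero => simp
    | add x y hx hy => simp only [map_add, LinearMap.add_apply, hx, hy, add_mul]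
    | tmul a a' =>
    induction b using TensorProduct.induction_on with
    | zero => simp
    | add x y hx hy => simp only [map_add, hx, hy, mul_add]
    | tmul b b' =>
      simp [opMul, opCounit, hH.counit_mul]
      ring
  counit_one := by simp [opCounit, hH.counit_one]

noncomputable def opCM : HomComod (opB hH).toHomCoalg H where
  str := hH.str
  coact := opCoact hH
  hom_coassoc := opCoact_coassoc hH
  counit_coact := opCoact_counit hH
  coact_str := opCoact_str hH

end Untwist

/-- `H^op ⊗ H` is a monoidal Hom-bialgebra, and `H` with the coaction
`h ↦ α((h₂)₁) ⊗ ((h₂)₂ ⊗ S(α⁻¹(h₁)))` is a right `H^op ⊗ H`-Hom-comodule algebra. -/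
theorem opTensor_comodule_algebra {k : Type*} [CommRing k] {H : Type*}
    [AddCommGroup H] [Module k H] (hH : HomHopf k H) (hS : Function.Bijective hH.S) :
    ∃ b : HomBialg k (H ⊗[k] H),
      b.str = TensorProduct.congr hH.str hH.str ∧
      b.mul = opMul hH ∧
      b.one = hH.one ⊗ₜ[k] hH.one ∧
      b.comul = opComul hH ∧
      b.counit = opCounit hH ∧
      ∃ cm : HomComod b.toHomCoalg H,
        cm.str = hH.str ∧ cm.coact = opCoact hH ∧
        (∀ h g : H, opCoact hH (hH.mul h g) =
          TensorProduct.map₂ hH.mul (opMul hH) (opCoact hH h) (opCoact hH g)) ∧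
        opCoact hH hH.one = hH.one ⊗ₜ[k] (hH.one ⊗ₜ[k] hH.one) := by
  exact ⟨Untwist.opB hH, rfl, rfl, rfl, rfl, rfl, Untwist.opCM hH, rfl, rfl, Untwist.opCoact_mul hH, Untwist.opCoact_one hH⟩
end

section
/- Let (H, α) be a monoidal Hom-Hopf algebra with bijective antipode, and let H^op⊗H denote the k-module H⊗H with multiplication (h⊗k)(l⊗m) = hl ⊗ mk, unit 1_H⊗1_H, comultiplication (h⊗k) ↦ (h₁⊗k₁)⊗(h₂⊗k₂), counit (h⊗k) ↦ ε(h)ε(k), and invertible map α⊗α. Then H, with invertible map α and action c ◁ (h⊗k) = α(k)(α⁻¹(c)h) for c, h, k ∈ H, is a right (H^op⊗H)-Hom-module, i.e. [c ◁ (h⊗k)] ◁ (α(l)⊗α(m)) = α(c) ◁ (hl⊗mk), c ◁ (1_H⊗1_H) = α(c), and α(c ◁ (h⊗k)) = α(c) ◁ (α(h)⊗α(k)); moreover Δ(c ◁ (h⊗k)) = (c₁ ◁ (h₁⊗k₁)) ⊗ (c₂ ◁ (h₂⊗k₂)) and ε(c ◁ (h⊗k)) = ε(c)ε(h)ε(k),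 so that H is a right H^op⊗H-Hom-module coalgebra. -/
open TensorProduct

open DoiHomHopf

theorem opAct_tmul {k : Type*} [CommRing k] {H : Type*} [AddCommGroup H] [Module k H]
    (hH : HomHopf k H) (c h g : H) :
    opAct hH c (h ⊗ₜ[k] g) = hH.mul (hH.str g) (hH.mul (hH.str.symm c) h) := by
  simp [opAct]

theorem str_symm_mul {k : Type*} [CommRing k] {H : Type*} [AddCommGroup H] [Module k H]
    (hH : HomHopf k H) (a b : H) :
    hH.str.symm (hH.mul a b) = hH.mul (hH.str.symm a) (hH.str.symm b) := by
  apply hH.str.injective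
  rw [hH.str_mul]; simp

theorem comul_symm {k : Type*} [CommRing k] {H : Type*} [AddCommGroup H] [Module k H]
    (hH : HomHopf k H) (c : H) : hH.comul (hH.str.symm c) =
      TensorProduct.map hH.str.symm.toLinearMap hH.str.symm.toLinearMap (hH.comul c) := by
  obtain ⟨d, rfl⟩ := hH.str.surjective c
  rw [hH.comul_str, ← LinearMap.comp_apply, ← TensorProduct.map_comp]
  simp

theorem counit_symm {k : Type*} [CommRing k] {H : Type*} [AddCommGroup H] [Module k H]
    (hH : HomHopf k H) (c : H) : hH.counit (hH.str.symm c) = hH.counit c := by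
  obtain ⟨d, rfl⟩ := hH.str.surjective c
  rw [hH.counit_str]; simp

theorem comul_aux {k : Type*} [CommRing k] {H : Type*} [AddCommGroup H] [Module k H]
    (hH : HomHopf k H) (x y z : H ⊗[k] H) :
    TensorProduct.map₂ hH.mul hH.mul
      (TensorProduct.map hH.str.toLinearMap hH.str.toLinearMap z)
      (TensorProduct.map₂ hH.mul hH.mul
        (TensorProduct.map hH.str.symm.toLinearMap hH.str.symm.toLinearMap x) y) =
    TensorProduct.map₂ (opAct hH) (opAct hH) x
      (TensorProduct.tensorTensorTensorComm k H H H H (y ⊗ₜ[k] z)) := by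
  induction x with
  | zero => simp
  | add a b ha hb => simp only [map_add, LinearMap.add_apply, ha, hb]
  | tmul c c' =>
  induction y with
  | zero => simp
  | add a b ha hb => simp only [map_add, LinearMap.add_apply, TensorProduct.add_tmul, ha, hb]
  | tmul h h' =>
  induction z with
  | zero => simp
  | add a b ha hb => simp only [map_add, LinearMap.add_apply, TensorProduct.tmul_add, ha, hb]
  | tmul g g' => simp [opAct_tmul]

/-- `H` with the action `c ◁ (h ⊗ k) = α(k)(α⁻¹(c)h)` is a right
`H^op ⊗ H`-Hom-module coalgebra. -/
theorem opTensor_module_coalgebra {k : Type*} [CommRing k] {H : Type*}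
    [AddCommGroup H] [Module k H] (hH : HomHopf k H) (hS : Function.Bijective hH.S)
    (hD : HomBialg k (H ⊗[k] H))
    (hD_str : hD.str = TensorProduct.congr hH.str hH.str)
    (hD_mul : hD.mul = opMul hH)
    (hD_one : hD.one = hH.one ⊗ₜ[k] hH.one)
    (hD_comul : hD.comul = opComul hH)
    (hD_counit : hD.counit = opCounit hH) :
    ∃ mc : HomModCoalg hD H,
      mc.str = hH.str ∧ mc.comul = hH.comul ∧ mc.counit = hH.counit ∧ mc.act = opAct hH := by
  refine ⟨{ toHomCoalg := hH.toHomCoalg, act := opAct hH, act_act := ?_, act_one := ?_,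
            str_act := ?_, comul_act := ?_, counit_act := ?_ }, rfl, rfl, rfl, rfl⟩
  · intro c x y
    rw [hD_str, hD_mul]
    induction x with
    | zero => simp
    | add a b ha hb => simp only [map_add, LinearMap.add_apply, ha, hb]
    | tmul h g =>
    induction y with
    | zero => simp
    | add a b ha hb => simp only [map_add, ha, hb]
    | tmul l m =>
    simp only [opMul, TensorProduct.congr_tmul, TensorProduct.map₂_apply_tmul, TensorProduct.map_tmul,
      LinearMap.flip_apply, opAct_tmul, str_symm_mul, LinearEquiv.symm_apply_apply]
    rw [← hH.hom_assoc, hH.hom_assoc (hH.str m), ← hH.str_mul, hH.str_mul (hH.mul _ _) l,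
      hH.str_mul (hH.str.symm _)]
    simp only [LinearEquiv.apply_symm_apply]
    rw [← hH.hom_assoc, LinearEquiv.apply_symm_apply]
  · intro c
    rw [hD_one, opAct_tmul, hH.mul_one, hH.str_one, hH.one_mul, LinearEquiv.apply_symm_apply]
  · intro c x
    rw [hD_str]
    induction x with
    | zero => simp
    | add a b ha hb => simp only [map_add, ha, hb]
    | tmul h g =>
    simp only [TensorProduct.congr_tmul, opAct_tmul, hH.str_mul, LinearEquiv.symm_apply_apply,
      LinearEquiv.apply_symm_apply]
  · intro c x
    rw [hD_comul]
    induction x with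
    | zero => simp
    | add a b ha hb => simp only [map_add, ha, hb]
    | tmul h g =>
    rw [opAct_tmul, hH.comul_mul, hH.comul_mul, hH.comul_str, comul_symm, comul_aux]
    simp [opComul]
  · intro c x
    rw [hD_counit]
    induction x with
    | zero => simp
    | add a b ha hb => simp only [map_add, mul_add, ha, hb]
    | tmul h g =>
    rw [opAct_tmul, hH.counit_mul, hH.counit_mul, hH.counit_str, counit_symm]
    simp [opCounit]
    ring
end

section
/- Let (H, α) be a monoidal Hom-Hopf algebra with bijective antipode S. Consider H^op⊗H (the k-module H⊗H with multiplication (h⊗k)(l⊗m) = hl⊗mk, unit 1⊗1, componentwise comultiplication, counit ε⊗ε and map α⊗α), H as a right H^op⊗H-Hom-comodule algebra via ρ(h) = α((h₂)₁) ⊗ ((h₂)₂ ⊗ S(α⁻¹(h₁))), and H as a right H^op⊗H-Hom-module coalgebra via c ◁ (h⊗k) = α(k)(α⁻¹(c)h). Then for a k-module M with an invertible k-linear map μ that is a right (H,α)-Hom-module and a right (H,α)-Hom-comodule, M is a Doi Hom-Hopf module over the Doi Hom-Hopf datum (H^op⊗H, H, H) if and only if M is a right-right Hom-Yetter-Drinfeld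 module, i.e. m₀·h₁ ⊗ m₁h₂ = μ((μ⁻¹(m)·h₂)₀) ⊗ h₁(μ⁻¹(m)·h₂)₁ for all m ∈ M, h ∈ H. -/
open TensorProduct

open DoiHomHopf

section Helpers

variable {k : Type*} [CommRing k] {H M : Type*}
    [AddCommGroup H] [Module k H] [AddCommGroup M] [Module k M]

/-- Left multiplication on the second factor of `M ⊗ H`. -/
noncomputable def ydL (M : Type*) [AddCommGroup M] [Module k M] (hH : HomHopf k H) :
    H →ₗ[k] (M ⊗[k] H) →ₗ[k] (M ⊗[k] H) :=
  LinearMap.lTensorHom M ∘ₗ hH.mul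

theorem ydL_tmul (hH : HomHopf k H) (x : H) (n : M) (c : H) :
    ydL M hH x (n ⊗ₜ[k] c) = n ⊗ₜ[k] hH.mul x c := by
  simp [ydL]

theorem ydL_ydL (hH : HomHopf k H) (x y : H) (w : M ⊗[k] H) :
    ydL M hH x (ydL M hH y w) =
      ydL M hH (hH.mul (hH.str.symm x) y) (LinearMap.lTensor M hH.str.toLinearMap w) := by
  induction w with
  | zero => simp
  | add a b ha hb => simp only [map_add, ha, hb]
  | tmul n c =>
    have := hH.hom_assoc (hH.str.symm x) y c
    simp only [LinearEquiv.apply_symm_apply] at this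
    simp [ydL_tmul, this]

theorem ydL_one (hH : HomHopf k H) (w : M ⊗[k] H) :
    ydL M hH hH.one w = LinearMap.lTensor M hH.str.toLinearMap w := by
  induction w with
  | zero => simp
  | add a b ha hb => simp only [map_add, ha, hb]
  | tmul n c => simp [ydL_tmul, hH.one_mul]

theorem ydKey (hH : HomHopf k H) (f g : H →ₗ[k] H)
    (hf : ∀ h, f (hH.str.symm h) = hH.str.symm (f h))
    (hfg : ∀ h, TensorProduct.lift hH.mul (TensorProduct.map f g (hH.comul h)) =
      hH.counit h • hH.one)
    (N : H →ₗ[k] M ⊗[k] H) (h : H) :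
    TensorProduct.lift (ydL M hH) (TensorProduct.map f
      (TensorProduct.lift (ydL M hH) ∘ₗ TensorProduct.map g N ∘ₗ hH.comul) (hH.comul h)) =
    LinearMap.lTensor M hH.str.toLinearMap (LinearMap.lTensor M hH.str.toLinearMap
      (N (hH.str.symm (hH.str.symm h)))) := by
  let G : H ⊗[k] (H ⊗[k] H) →ₗ[k] M ⊗[k] H :=
    TensorProduct.lift (ydL M hH) ∘ₗ
      TensorProduct.map (TensorProduct.lift hH.mul ∘ₗ TensorProduct.map f g)
        (LinearMap.lTensor M hH.str.toLinearMap ∘ₗ N) ∘ₗ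
      (TensorProduct.assoc k H H H).symm.toLinearMap
  have h1 : ∀ w : H ⊗[k] H, TensorProduct.lift (ydL M hH) (TensorProduct.map f
      (TensorProduct.lift (ydL M hH) ∘ₗ TensorProduct.map g N ∘ₗ hH.comul) w) =
      G (TensorProduct.map hH.str.symm.toLinearMap hH.comul w) := by
    intro w
    induction w with
    | zero => simp
    | add a b ha hb => simp only [map_add, ha, hb]
    | tmul a b =>
      simp only [TensorProduct.map_tmul, LinearMap.comp_apply, TensorProduct.lift.tmul]
      generalize hH.comul b = v
      induction v with
      | zero => simp
      | add a b ha hb => simp only [map_add, TensorProduct.tmul_add, ha, hb]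
      | tmul c d =>
        simp [G, ydL_ydL, hf]
  have h2 : ∀ w : H ⊗[k] H, G (TensorProduct.assoc k H H H
      (TensorProduct.map hH.comul hH.str.symm.toLinearMap w)) =
      LinearMap.lTensor M hH.str.toLinearMap (LinearMap.lTensor M hH.str.toLinearMap
      (N (hH.str.symm (TensorProduct.lid k H
        (TensorProduct.map hH.counit LinearMap.id w))))) := by
    intro w
    induction w with
    | zero => simp
    | add a b ha hb => simp only [map_add, ha, hb]
    | tmul a b =>
      simp [G, hfg, ydL_one]
  rw [h1, hH.hom_coassoc, h2, hH.counit_comul_left]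

/-- `y ↦ m₀ · y₁ ⊗ m₁ y₂`. -/
noncomputable def ydP (hH : HomHopf k H) (act : M →ₗ[k] H →ₗ[k] M) (t : M ⊗[k] H) :
    H →ₗ[k] M ⊗[k] H :=
  TensorProduct.map₂ act hH.mul t ∘ₗ hH.comul

theorem ydP_str (hH : HomHopf k H) (mM : HomMod hH.toHomBialg.toHomAlg M) (t : M ⊗[k] H)
    (y : H) :
    ydP hH mM.act (TensorProduct.map mM.str.toLinearMap hH.str.toLinearMap t) (hH.str y) =
      TensorProduct.map mM.str.toLinearMap hH.str.toLinearMap (ydP hH mM.act t y) := by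
  simp only [ydP, LinearMap.comp_apply, hH.comul_str]
  generalize hH.comul y = v
  induction v with
  | zero => simp
  | add a b ha hb => simp only [map_add, ha, hb]
  | tmul c d =>
    induction t with
    | zero => simp
    | add a b ha hb => simp only [map_add, LinearMap.add_apply, ha, hb]
    | tmul n e => simp [TensorProduct.map₂_apply_tmul, mM.str_act, hH.str_mul]

theorem ydDoi (hH : HomHopf k H) (act : M →ₗ[k] H →ₗ[k] M) (t : M ⊗[k] H) (h : H) :
    TensorProduct.map₂ act (opAct hH) t (opCoact hH h) =
      TensorProduct.lift (ydL M hH) (TensorProduct.map hH.S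
        (LinearMap.lTensor M hH.str.symm.toLinearMap ∘ₗ ydP hH act t ∘ₗ hH.str.toLinearMap)
        (hH.comul h)) := by
  have hs : ∀ x, hH.str (hH.S (hH.str.symm x)) = hH.S x := by
    intro x
    rw [← hH.S_str, LinearEquiv.apply_symm_apply]
  have hm : ∀ x y, hH.str.symm (hH.mul x y) = hH.mul (hH.str.symm x) (hH.str.symm y) := by
    intro x y
    apply hH.str.injective
    simp [hH.str_mul]
  simp only [opCoact, LinearMap.comp_apply]
  generalize hH.comul h = w
  induction w with
  | zero => simp
  | add a b ha hb => simp only [map_add, ha, hb]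
  | tmul a b =>
    simp only [TensorProduct.map_tmul, LinearMap.comp_apply, TensorProduct.lift.tmul, ydP,
      LinearEquiv.coe_coe, hH.comul_str]
    generalize hH.comul b = v
    induction v with
    | zero => simp
    | add a b ha hb =>
      simp only [map_add, TensorProduct.tmul_add, ha, hb]
    | tmul c d =>
      induction t with
      | zero => simp
      | add a b ha hb => simp only [map_add, LinearMap.add_apply, ha, hb]
      | tmul n e => simp [TensorProduct.map₂_apply_tmul, opAct, ydL_tmul, hs, hm]

theorem ydRhs (hH : HomHopf k H) (f : M →ₗ[k] M) (R : H →ₗ[k] M ⊗[k] H) (w : H ⊗[k] H) :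
    TensorProduct.map f (TensorProduct.lift hH.mul)
      ((TensorProduct.assoc k M H H)
        (TensorProduct.map (TensorProduct.comm k H M).toLinearMap LinearMap.id
          ((TensorProduct.assoc k H M H).symm
            (TensorProduct.map LinearMap.id R w)))) =
    LinearMap.rTensor H f (TensorProduct.lift (ydL M hH) (TensorProduct.map LinearMap.id R w)) := by
  induction w with
  | zero => simp
  | add a b ha hb => simp only [map_add, ha, hb]
  | tmul a b =>
    simp only [TensorProduct.map_tmul, TensorProduct.lift.tmul, LinearMap.id_apply]
    generalize R b = v
    induction v with
    | zero => simp
    | add a b ha hb => simp only [map_add, TensorProduct.tmul_add, ha, hb]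
    | tmul n c => simp [ydL_tmul]

theorem ydN (hH : HomHopf k H) (f : M →ₗ[k] M) (R : H →ₗ[k] M ⊗[k] H) (y : H) :
    LinearMap.lTensor M hH.str.symm.toLinearMap (LinearMap.rTensor H f
      (TensorProduct.lift (ydL M hH) (TensorProduct.map LinearMap.id R (hH.comul (hH.str y))))) =
    TensorProduct.lift (ydL M hH) (TensorProduct.map LinearMap.id
      (TensorProduct.map f hH.str.symm.toLinearMap ∘ₗ R ∘ₗ hH.str.toLinearMap) (hH.comul y)) := by
  have hm : ∀ x y, hH.str.symm (hH.mul x y) = hH.mul (hH.str.symm x) (hH.str.symm y) := by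
    intro x y
    apply hH.str.injective
    simp [hH.str_mul]
  rw [hH.comul_str]
  generalize hH.comul y = w
  induction w with
  | zero => simp
  | add a b ha hb => simp only [map_add, ha, hb]
  | tmul a b =>
    simp only [TensorProduct.map_tmul, TensorProduct.lift.tmul, LinearMap.id_apply,
      LinearMap.comp_apply]
    generalize R _ = v
    induction v with
    | zero => simp
    | add a b ha hb => simp only [map_add, ha, hb]
    | tmul n c => simp [ydL_tmul, hm]

theorem ydEquiv (hH : HomHopf k H) (mM : HomMod hH.toHomBialg.toHomAlg M)
    (cM : HomComod hH.toHomBialg.toHomCoalg M) (hc : cM.str = mM.str) :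
    (∀ m h, cM.coact (mM.act m h) =
      TensorProduct.map₂ mM.act (opAct hH) (cM.coact m) (opCoact hH h)) ↔
    (∀ (m : M) (h : H),
        TensorProduct.map₂ mM.act hH.mul (cM.coact m) (hH.comul h) =
          TensorProduct.map mM.str.toLinearMap (TensorProduct.lift hH.mul)
            ((TensorProduct.assoc k M H H)
              (TensorProduct.map (TensorProduct.comm k H M).toLinearMap LinearMap.id
                ((TensorProduct.assoc k H M H).symm
                  (TensorProduct.map LinearMap.id (cM.coact ∘ₗ mM.act (mM.str.symm m))
                    (hH.comul h)))))) := by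
  have hSs : ∀ h, hH.S (hH.str.symm h) = hH.str.symm (hH.S h) := by
    intro x
    apply hH.str.injective
    rw [← hH.S_str, LinearEquiv.apply_symm_apply, LinearEquiv.apply_symm_apply]
  have hcs : ∀ m, cM.coact (mM.str m) =
      TensorProduct.map mM.str.toLinearMap hH.str.toLinearMap (cM.coact m) := by
    intro m
    have := cM.coact_str m
    rwa [hc] at this
  have cl : ∀ w : M ⊗[k] H, LinearMap.rTensor H mM.str.toLinearMap
      (LinearMap.lTensor M hH.str.toLinearMap (LinearMap.lTensor M hH.str.toLinearMap
        (LinearMap.lTensor M hH.str.symm.toLinearMap w))) =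
      TensorProduct.map mM.str.toLinearMap hH.str.toLinearMap w := by
    intro w
    induction w with
    | zero => simp
    | add a b ha hb => simp only [map_add, ha, hb]
    | tmul n c => simp
  have cl2 : ∀ w : M ⊗[k] H, 
      (LinearMap.lTensor M hH.str.toLinearMap (LinearMap.lTensor M hH.str.toLinearMap
        (TensorProduct.map mM.str.toLinearMap hH.str.symm.toLinearMap w))) =
      TensorProduct.map mM.str.toLinearMap hH.str.toLinearMap w := by
    intro w
    induction w with
    | zero => simp
    | add a b ha hb => simp only [map_add, ha, hb]
    | tmul n c => simp
  simp only [ydDoi, ydRhs]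
  constructor
  · intro hd m h
    obtain ⟨m, rfl⟩ := mM.str.surjective m
    rw [LinearEquiv.symm_apply_apply]
    have hR : cM.coact ∘ₗ mM.act m = TensorProduct.lift (ydL M hH) ∘ₗ TensorProduct.map hH.S
        (LinearMap.lTensor M hH.str.symm.toLinearMap ∘ₗ ydP hH mM.act (cM.coact m) ∘ₗ
          hH.str.toLinearMap) ∘ₗ hH.comul := by
      ext y
      exact hd m y
    rw [hR, ydKey hH LinearMap.id hH.S (fun _ => rfl) hH.mul_S_comul]
    simp only [LinearMap.comp_apply, LinearEquiv.coe_coe, LinearEquiv.apply_symm_apply]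
    rw [cl, ← ydP_str, LinearEquiv.apply_symm_apply, hcs]
    rfl
  · intro hy m h
    obtain ⟨m, rfl⟩ := mM.str.surjective m
    have hR : LinearMap.lTensor M hH.str.symm.toLinearMap ∘ₗ
        ydP hH mM.act (cM.coact (mM.str m)) ∘ₗ hH.str.toLinearMap =
        TensorProduct.lift (ydL M hH) ∘ₗ TensorProduct.map LinearMap.id
          (TensorProduct.map mM.str.toLinearMap hH.str.symm.toLinearMap ∘ₗ
            (cM.coact ∘ₗ mM.act m) ∘ₗ hH.str.toLinearMap) ∘ₗ hH.comul := by
      ext y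
      have := hy (mM.str m) (hH.str y)
      rw [LinearEquiv.symm_apply_apply] at this
      simp only [LinearMap.comp_apply, ydP, LinearEquiv.coe_coe]
      rw [this, ydN]
    rw [hR, ydKey hH hH.S LinearMap.id hSs hH.S_mul_comul]
    simp only [LinearMap.comp_apply, LinearEquiv.coe_coe, LinearEquiv.apply_symm_apply]
    rw [cl2, ← hcs, mM.str_act]
    congr 2
    exact (hH.str.apply_symm_apply h).symm

end Helpers

/-- `M` is a Doi Hom-Hopf module over the Doi Hom-Hopf datum
`(H^op ⊗ H, H, H)` iff `M` is a right-right Hom-Yetter-Drinfeld module over `(H, α)`. -/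
theorem doiModule_iff_yetterDrinfeld {k : Type*} [CommRing k] {H M : Type*}
    [AddCommGroup H] [Module k H] [AddCommGroup M] [Module k M]
    (hH : HomHopf k H) (hS : Function.Bijective hH.S)
    (hD : HomBialg k (H ⊗[k] H))
    (hD_str : hD.str = TensorProduct.congr hH.str hH.str)
    (hD_mul : hD.mul = opMul hH)
    (hD_one : hD.one = hH.one ⊗ₜ[k] hH.one)
    (hD_comul : hD.comul = opComul hH)
    (hD_counit : hD.counit = opCounit hH)
    (hA : HomComodAlg hD H)
    (hA_str : hA.str = hH.str) (hA_mul : hA.mul = hH.mul) (hA_one : hA.one = hH.one)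
    (hA_coact : hA.coact = opCoact hH)
    (hC : HomModCoalg hD H)
    (hC_str : hC.str = hH.str) (hC_comul : hC.comul = hH.comul)
    (hC_counit : hC.counit = hH.counit) (hC_act : hC.act = opAct hH)
    (μ : M ≃ₗ[k] M)
    (mM : HomMod hH.toHomBialg.toHomAlg M) (cM : HomComod hH.toHomBialg.toHomCoalg M)
    (hm : mM.str = μ) (hc : cM.str = μ) :
    (∃ d : DoiMod hA hC M, d.str = μ ∧ d.act = mM.act ∧ d.coact = cM.coact) ↔
    (∀ (m : M) (h : H),
        TensorProduct.map₂ mM.act hH.mul (cM.coact m) (hH.comul h) =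
          TensorProduct.map mM.str.toLinearMap (TensorProduct.lift hH.mul)
            ((TensorProduct.assoc k M H H)
              (TensorProduct.map (TensorProduct.comm k H M).toLinearMap LinearMap.id
                ((TensorProduct.assoc k H M H).symm
                  (TensorProduct.map LinearMap.id (cM.coact ∘ₗ mM.act (mM.str.symm m))
                    (hH.comul h)))))) := by
  subst hm
  rw [← ydEquiv hH mM cM hc]
  constructor
  · rintro ⟨d, h1, h2, h3⟩ m h
    have := d.compat m h
    rwa [h2, h3, hC_act, hA_coact] at this
  · intro hd
    refine ⟨{ str := mM.str, act := mM.act, coact := cM.coact, act_act := ?_, act_one := ?_, str_act := ?_, hom_coassoc := ?_, counit_coact := ?_, coact_str := ?_, compat := ?_ }, rfl, rfl, rfl⟩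
    · rw [hA_str, hA_mul]; exact mM.act_act
    · rw [hA_one]; exact mM.act_one
    · rw [hA_str]; exact mM.str_act
    · rw [hC_str, hC_comul, ← hc]; exact cM.hom_coassoc
    · rw [hC_counit, ← hc]; exact cM.counit_coact
    · rw [hC_str, ← hc]; exact cM.coact_str
    · rw [hC_act, hA_coact]; exact hd
end

section
/- Let k be a field and (H, α) a finite-dimensional monoidal Hom-Hopf algebra with bijective antipode S. Consider the Doi Hom-Hopf datum (H, k, H), where A = k (with β = id, unit 1 and multiplication of k) is a right (H,α)-Hom-comodule algebra via the coaction λ ↦ λ⊗1_H, and C = H is a right (H,α)-Hom-module coalgebra via the multiplication of H. If θ : H⊗H → k is a normalized k-integral for this datum, then the linear functional φ : H → k defined by φ(h) = θ(1_H⊗h) is a right integral on H*, i.e. φ(h₁)h*(h₂) = h*(1_H)φ(h) for all h* ∈ H* and h ∈ H, and φ∘α = φ. -/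
open TensorProduct

open DoiHomHopf

/-- For the Doi Hom-Hopf datum `(H, k, H)`, if `θ : H ⊗ H → k` is a
normalized `k`-integral, then `φ(h) = θ(1_H ⊗ h)` is a right integral on `H*`. -/
theorem integral_of_nIntegral {k : Type*} [Field k] {H : Type*}
    [AddCommGroup H] [Module k H] [FiniteDimensional k H]
    (hH : HomHopf k H) (hS : Function.Bijective hH.S)
    (hA : HomComodAlg hH.toHomBialg k)
    (hA_str : hA.str = LinearEquiv.refl k k)
    (hA_mul : hA.mul = LinearMap.mul k k)
    (hA_one : hA.one = 1)
    (hA_coact : hA.coact = (TensorProduct.mk k k H).flip hH.one)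
    (hC : HomModCoalg hH.toHomBialg H)
    (hC_str : hC.str = hH.str) (hC_comul : hC.comul = hH.comul)
    (hC_counit : hC.counit = hH.counit) (hC_act : hC.act = hH.mul)
    (n : NIntegral hA hC) :
    (∀ (f : H →ₗ[k] k) (h : H),
        TensorProduct.lid k k
          (TensorProduct.map (TensorProduct.curry n.θ hH.one) f (hH.comul h)) =
          f hH.one * TensorProduct.curry n.θ hH.one h) ∧
    (∀ h : H, TensorProduct.curry n.θ hH.one (hH.str h) = TensorProduct.curry n.θ hH.one h) := by
  have hstr : ∀ h : H, TensorProduct.curry n.θ hH.one (hH.str h) =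
      TensorProduct.curry n.θ hH.one h := by
    intro h
    have h1 := n.θ_str hH.one h
    rw [hC_str, hA_str, hH.str_one] at h1
    simpa using h1
  refine ⟨?_, hstr⟩
  intro f h
  have h1 := n.cond1 h hH.one
  have hs : hH.str.symm hH.one = hH.one := by
    rw [LinearEquiv.symm_apply_eq, hH.str_one]
  rw [hC_str, hC_comul, hC_act, hA_str, hA_coact, hH.comul_one, hs] at h1
  have h3 : (f ∘ₗ hH.str.symm.toLinearMap) ∘ₗ hH.str.toLinearMap = f := by
    ext x; simp
  have h5 : TensorProduct.map (TensorProduct.curry n.θ hH.one) f (hH.comul h) =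
      TensorProduct.map LinearMap.id (f ∘ₗ hH.str.symm.toLinearMap)
        (TensorProduct.map (TensorProduct.curry n.θ hH.one) hH.str.toLinearMap (hH.comul h)) := by
    rw [← LinearMap.comp_apply (TensorProduct.map LinearMap.id _), ← TensorProduct.map_comp, h3,
      LinearMap.id_comp]
  have h4 := hstr (hH.str.symm h)
  rw [LinearEquiv.apply_symm_apply] at h4
  rw [h5, h1, h4]
  simp [hH.mul_one, hH.str_one, hs, mul_comm]
end
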